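/- For every pair of integers ℓ, m ≥ 0 there exists a constant C_{ℓ,m} such that for all R ≥ 1 and all ρ ∈ [1,R], the first eigenfunction v_R satisfies ‖∂₁^ℓ ∂₂^m v_R‖_{L²(Σ_ρ¹)} ≤ C_{ℓ,m} e^{-ρω} and ‖∂₂^ℓ ∂₁^m v_R‖_{L²(Σ_ρ²)} ≤ C_{ℓ,m} e^{-ρω}, where Σ_ρ¹={ρ}×I, Σ_ρ²=I×{ρ}, and the constants are independent of R and ρ. -/

import Mathlib

/-!
On the horizontal arm `(0,R) × (-1,0)` the eigenfunction vanishes on the two long sides, so its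
cross-sections are sums of sine series. The sine coefficients `a_k(x) = ∫ v(x,t) sin(kπt) dt`
satisfy `a_k'' = ((kπ)² - λ) a_k` with `a_k'(R) = 0`, where `λ = λ₁(Γ_R)`; hence
`a_k(x) = a_k(R) cosh(μ_k (R - x))` with `μ_k² = (kπ)² - λ` (`Arm.coef_eq`, `Arm.hyp`). Since only
continuity is known at the long sides, the equation is derived for a slightly contracted
cross-section, and the contraction is undone by a stability estimate (`ode_stability`).

The mass of `v` being at most `1` bounds `a_k` on `(0,1/2)`, and the explicit form then gives
`|a_k^{(l)}(x)| ≤ 4 (kπ)^l e^{-ω(x-3/4)} e^{-(k-1)π/4}` for `x ≥ 3/4`, provided `ω ≤ μ_1`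
(`Arm.coef_bound`). The exponential gain in `k` makes the series differentiable term by term to
every order, which gives the pointwise and then the `L²` bound (`Arm.deriv_bound`,
`Arm.L2_bound`); the edge `x = R` is reached by continuity.

The inequality `ω ≤ μ_1` means `λ₁(Γ_R) ≤ λ₁(Γ)`. It holds because a test function on `Γ` with
Rayleigh quotient below `π²` does not gain from its part outside `Γ_R`, where the Poincaré
inequality on the cross-sections makes the quotient at least `π²` (`lamR_le_lamG`). The fact that
`λ₁(Γ) < π²` is not needed: otherwise `ω = 0`, and a possible oscillation of the first mode is
limited to a quarter period by the positivity of `v` (`Arm.trig`).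

The second estimate is the first one for the reflection of `v` in the diagonal
(`IsFirstEF.swap`).
-/

noncomputable section
open MeasureTheory Set Real

/-- The interval `I = (-1,0)`. -/
def II : Set ℝ := Set.Ioo (-1) 0

/-- The broken guide `Γ = {x ∈ ℝ² : -1 < min(x₁,x₂) < 0}`. -/
def Gam : Set (ℝ × ℝ) := {p | -1 < min p.1 p.2 ∧ min p.1 p.2 < 0}

/-- The box `□_L = {x : max(|x₁+1|,|x₂+1|) < L}`. -/
def Box (L : ℝ) : Set (ℝ × ℝ) := {p | |p.1 + 1| < L ∧ |p.2 + 1| < L}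

/-- The finite guide `Γ_R = Γ ∩ □_{R+1}`. -/
def GamR (R : ℝ) : Set (ℝ × ℝ) := Gam ∩ Box (R + 1)

/-- The Neumann part `Σ_R = ∂Γ_R ∩ ∂□_{R+1}` of the boundary. -/
def Sig (R : ℝ) : Set (ℝ × ℝ) := frontier (GamR R) ∩ frontier (Box (R + 1))

/-- The Dirichlet part `∂Γ_R ∖ Σ_R` of the boundary. -/
def DirB (R : ℝ) : Set (ℝ × ℝ) := frontier (GamR R) \ Sig R

/-- Squared gradient `|∇u|² = (∂₁u)² + (∂₂u)²`. -/
def gradSq2 (u : ℝ × ℝ → ℝ) (p : ℝ × ℝ) : ℝ :=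
  (fderiv ℝ u p (1, 0)) ^ 2 + (fderiv ℝ u p (0, 1)) ^ 2

/-- Admissible functions for the mixed problem on `Γ_R`: `C¹` up to the boundary
(modelled by a globally `C¹` extension) vanishing on the Dirichlet part. -/
def AdmR (R : ℝ) (u : ℝ × ℝ → ℝ) : Prop :=
  ContDiff ℝ 1 u ∧ ∀ p ∈ DirB R, u p = 0

/-- First Rayleigh quotient `λ₁(Γ_R)` of the mixed Dirichlet–Neumann Laplacian on `Γ_R`. -/
def lamR (R : ℝ) : ℝ :=
  sInf {r | ∃ u : ℝ × ℝ → ℝ, AdmR R u ∧ (∫ p in GamR R, (u p) ^ 2) ≠ 0 ∧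
    r = (∫ p in GamR R, gradSq2 u p) / ∫ p in GamR R, (u p) ^ 2}

/-- First Rayleigh quotient `λ₁(Γ)` of the Dirichlet Laplacian on the broken guide `Γ`. -/
def lamG : ℝ :=
  sInf {r | ∃ u : ℝ × ℝ → ℝ, ContDiff ℝ 1 u ∧ HasCompactSupport u ∧ tsupport u ⊆ Gam ∧
    (∫ p in Gam, (u p) ^ 2) ≠ 0 ∧
    r = (∫ p in Gam, gradSq2 u p) / ∫ p in Gam, (u p) ^ 2}

/-- `ω = √(π² − λ₁(Γ))`. -/
def omega : ℝ := Real.sqrt (π ^ 2 - lamG)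

/-- Partial derivative `∂₁`. -/
def pd1 (u : ℝ × ℝ → ℝ) : ℝ × ℝ → ℝ := fun p => fderiv ℝ u p (1, 0)

/-- Partial derivative `∂₂`. -/
def pd2 (u : ℝ × ℝ → ℝ) : ℝ × ℝ → ℝ := fun p => fderiv ℝ u p (0, 1)

/-- Laplacian `Δ = ∂₁² + ∂₂²`. -/
def lap2 (u : ℝ × ℝ → ℝ) (p : ℝ × ℝ) : ℝ := pd1 (pd1 u) p + pd2 (pd2 u) p

/-- The open segments `Σ_R¹ = {R} × I` and `Σ_R² = I × {R}` (for `R ≥ 0`). -/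
def SigSeg (R : ℝ) : Set (ℝ × ℝ) := ({R} ×ˢ II) ∪ (II ×ˢ {R})

/-- `v` is the positive normalized first eigenfunction of the mixed Dirichlet–Neumann
Laplacian on `Γ_R`: smooth in `Γ_R` and up to the Neumann boundary, continuous up to the
closure, vanishing on the Dirichlet part, with vanishing normal derivative on `Σ_R`,
satisfying `-Δv = λ₁(Γ_R) v` in `Γ_R`, positive, and `L²`-normalized. -/
def IsFirstEF (R : ℝ) (v : ℝ × ℝ → ℝ) : Prop :=
  (∃ U : Set (ℝ × ℝ), IsOpen U ∧ GamR R ∪ SigSeg R ⊆ U ∧ ContDiffOn ℝ (⊤ : ℕ∞) v U) ∧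
  ContinuousOn v (closure (GamR R)) ∧
  (∀ p ∈ DirB R, v p = 0) ∧
  (∀ t ∈ II, pd1 v (R, t) = 0) ∧
  (∀ t ∈ II, pd2 v (t, R) = 0) ∧
  (∀ p ∈ GamR R, -(lap2 v p) = lamR R * v p) ∧
  (∀ p ∈ GamR R, 0 < v p) ∧
  (∫ p in GamR R, (v p) ^ 2) = 1

open Filter Topology

/-! ### Partial derivatives and a stability estimate -/


theorem pd1_contDiffOn {U : Set (ℝ × ℝ)} (hU : IsOpen U) {v : ℝ × ℝ → ℝ}
    (hv : ContDiffOn ℝ (⊤ : ℕ∞) v U) : ContDiffOn ℝ (⊤ : ℕ∞) (pd1 v) U :=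
  ((contDiffOn_infty_iff_fderiv_of_isOpen hU).1 hv).2.clm_apply contDiffOn_const

theorem pd2_contDiffOn {U : Set (ℝ × ℝ)} (hU : IsOpen U) {v : ℝ × ℝ → ℝ}
    (hv : ContDiffOn ℝ (⊤ : ℕ∞) v U) : ContDiffOn ℝ (⊤ : ℕ∞) (pd2 v) U :=
  ((contDiffOn_infty_iff_fderiv_of_isOpen hU).1 hv).2.clm_apply contDiffOn_const

theorem iter_pd1_contDiffOn {U : Set (ℝ × ℝ)} (hU : IsOpen U) {v : ℝ × ℝ → ℝ}
    (hv : ContDiffOn ℝ (⊤ : ℕ∞) v U) (n : ℕ) : ContDiffOn ℝ (⊤ : ℕ∞) (pd1^[n] v) U := by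
  induction n with
  | zero => simpa using hv
  | succ n ih => rw [Function.iterate_succ_apply']; exact pd1_contDiffOn hU ih

theorem iter_pd2_contDiffOn {U : Set (ℝ × ℝ)} (hU : IsOpen U) {v : ℝ × ℝ → ℝ}
    (hv : ContDiffOn ℝ (⊤ : ℕ∞) v U) (n : ℕ) : ContDiffOn ℝ (⊤ : ℕ∞) (pd2^[n] v) U := by
  induction n with
  | zero => simpa using hv
  | succ n ih => rw [Function.iterate_succ_apply']; exact pd2_contDiffOn hU ih

theorem hasDerivAt_pd1 {u : ℝ × ℝ → ℝ} {x t : ℝ} (h : DifferentiableAt ℝ u (x, t)) :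
    HasDerivAt (fun y => u (y, t)) (pd1 u (x, t)) x := by
  have h1 : HasDerivAt (fun y : ℝ => (y, t)) ((1 : ℝ), (0 : ℝ)) x :=
    (hasDerivAt_id x).prodMk (hasDerivAt_const x t)
  exact h.hasFDerivAt.comp_hasDerivAt x h1

theorem hasDerivAt_pd2 {u : ℝ × ℝ → ℝ} {x t : ℝ} (h : DifferentiableAt ℝ u (x, t)) :
    HasDerivAt (fun s => u (x, s)) (pd2 u (x, t)) t := by
  have h1 : HasDerivAt (fun s : ℝ => (x, s)) ((0 : ℝ), (1 : ℝ)) t :=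
    (hasDerivAt_const t x).prodMk (hasDerivAt_id t)
  exact h.hasFDerivAt.comp_hasDerivAt t h1

theorem differentiableAt_of_smooth {U : Set (ℝ × ℝ)} (hU : IsOpen U) {v : ℝ × ℝ → ℝ}
    (hv : ContDiffOn ℝ (⊤ : ℕ∞) v U) {p : ℝ × ℝ} (hp : p ∈ U) : DifferentiableAt ℝ v p :=
  (hv.differentiableOn (by simp)).differentiableAt (hU.mem_nhds hp)

/-- Differentiation under the integral sign along a curve `τ ↦ (y, φ τ)` that stays in the
open set where `F` is smooth. -/
theorem hasDerivAt_integral_pd1 {U : Set (ℝ × ℝ)} (hU : IsOpen U) {F : ℝ × ℝ → ℝ}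
    (hF : ContDiffOn ℝ (⊤ : ℕ∞) F U) {φ s : ℝ → ℝ} (hφ : Continuous φ) (hs : Continuous s)
    {x : ℝ} (hx : ∀ τ ∈ Icc (-1 : ℝ) 0, (x, φ τ) ∈ U) :
    HasDerivAt (fun y => ∫ τ in (-1 : ℝ)..0, F (y, φ τ) * s τ)
      (∫ τ in (-1 : ℝ)..0, pd1 F (x, φ τ) * s τ) x := by
  have hK : IsCompact (φ '' Icc (-1 : ℝ) 0) := isCompact_Icc.image hφ
  obtain ⟨A, B, hA, hB, hxA, hKB, hAB⟩ := generalized_tube_lemma (isCompact_singleton (x := x)) hK hU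
    (by rintro ⟨y, t⟩ ⟨hy, τ, hτ, ht⟩
        simp only [mem_singleton_iff] at hy ht
        subst hy; subst ht; exact hx τ hτ)
  obtain ⟨δ, hδ, hball⟩ := Metric.isOpen_iff.1 hA x (hxA rfl)
  have hmem : ∀ y ∈ Metric.ball x δ, ∀ τ ∈ Icc (-1 : ℝ) 0, (y, φ τ) ∈ U := fun y hy τ hτ =>
    hAB ⟨hball hy, hKB ⟨τ, hτ, rfl⟩⟩
  have hpF := pd1_contDiffOn hU hF
  have hcont : ∀ G : ℝ × ℝ → ℝ, ContinuousOn G U → ∀ y ∈ Metric.ball x δ,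
      ContinuousOn (fun τ => G (y, φ τ) * s τ) (Icc (-1 : ℝ) 0) := fun G hG y hy =>
    (hG.comp (by fun_prop) (fun τ hτ => hmem y hy τ hτ)).mul hs.continuousOn
  have hKc : IsCompact (Metric.closedBall x (δ / 2) ×ˢ Icc (-1 : ℝ) 0) :=
    (isCompact_closedBall x _).prod isCompact_Icc
  have hsub : Metric.closedBall x (δ / 2) ⊆ Metric.ball x δ :=
    Metric.closedBall_subset_ball (by linarith)
  obtain ⟨M, hM⟩ := hKc.exists_bound_of_continuousOn
    (f := fun q : ℝ × ℝ => pd1 F (q.1, φ q.2) * s q.2)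
    ((hpF.continuousOn.comp (by fun_prop) (fun q hq => hmem q.1 (hsub hq.1) q.2 hq.2)).mul
      (by fun_prop))
  have huI : uIoc (-1 : ℝ) 0 ⊆ Icc (-1) 0 := by
    rw [uIoc_of_le (by norm_num)]; exact Ioc_subset_Icc_self
  have hmeas : ∀ G : ℝ × ℝ → ℝ, ContinuousOn G U → ∀ y ∈ Metric.ball x δ,
      AEStronglyMeasurable (fun τ => G (y, φ τ) * s τ) (volume.restrict (uIoc (-1 : ℝ) 0)) :=
    fun G hG y hy => ((hcont G hG y hy).mono huI).aestronglyMeasurable measurableSet_uIoc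
  refine (intervalIntegral.hasDerivAt_integral_of_dominated_loc_of_deriv_le
    (F := fun y τ => F (y, φ τ) * s τ) (F' := fun y τ => pd1 F (y, φ τ) * s τ)
    (bound := fun _ => M) (s := Metric.ball x (δ / 2))
    (Metric.ball_mem_nhds x (by linarith)) ?_ ?_ ?_ ?_ ?_ ?_).2
  · filter_upwards [Metric.ball_mem_nhds x hδ] with y hy
    exact hmeas F hF.continuousOn y hy
  · apply ContinuousOn.intervalIntegrable
    rw [uIcc_of_le (by norm_num)]
    exact hcont F hF.continuousOn x (Metric.mem_ball_self hδ)
  · exact hmeas _ hpF.continuousOn x (Metric.mem_ball_self hδ)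
  · exact ae_of_all _ fun τ hτ y hy => hM (y, τ) ⟨Metric.ball_subset_closedBall hy, huI hτ⟩
  · exact intervalIntegrable_const
  · refine ae_of_all _ fun τ hτ y hy => ?_
    exact (hasDerivAt_pd1 (differentiableAt_of_smooth hU hF
      (hmem y (hsub (Metric.ball_subset_closedBall hy)) τ (huI hτ)))).mul_const _

/-- Stability of `A'' = c A`, `A'(R) = 0` under a perturbation of size `δ` of the right-hand
side. `C` and `S` stand for the fundamental solutions of `y'' = c y`. -/
theorem ode_stability {c δ x R K : ℝ} {C S A A' A'' : ℝ → ℝ} (hxR : x ≤ R)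
    (hC : ∀ z, HasDerivAt C (c * S z) z) (hS : ∀ z, HasDerivAt S (C z) z)
    (hC0 : C 0 = 1) (hS0 : S 0 = 0) (hCS : ∀ z, C z ^ 2 - c * S z ^ 2 = 1)
    (hKC : ∀ z ∈ Icc 0 (R - x), |C z| ≤ K) (hKS : ∀ z ∈ Icc 0 (R - x), |S z| ≤ K)
    (hA : ∀ y ∈ Icc x R, HasDerivAt A (A' y) y) (hA' : ∀ y ∈ Icc x R, HasDerivAt A' (A'' y) y)
    (hR : A' R = 0) (he : ∀ y ∈ Icc x R, |A'' y - c * A y| ≤ δ) :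
    |A x - C (R - x) * A R| ≤ 2 * K ^ 2 * (R - x) * δ := by
  have hx : x ∈ Icc x R := ⟨le_rfl, hxR⟩
  have hRR : R ∈ Icc x R := ⟨hxR, le_rfl⟩
  have hK0 : 0 ≤ K := (abs_nonneg _).trans (hKC 0 ⟨le_rfl, by linarith⟩)
  have hsub : ∀ y, HasDerivAt (fun y => R - y) (-1) y := fun y => by
    simpa using (hasDerivAt_id y).const_sub R
  have hCd : ∀ y, HasDerivAt (fun y => C (R - y)) (c * S (R - y) * (-1)) y := fun y =>
    (hC (R - y)).comp y (hsub y)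
  have hSd : ∀ y, HasDerivAt (fun y => S (R - y)) (C (R - y) * (-1)) y := fun y =>
    (hS (R - y)).comp y (hsub y)
  have hz : ∀ y ∈ Icc x R, R - y ∈ Icc 0 (R - x) := fun y hy => ⟨by linarith [hy.2], by linarith [hy.1]⟩
  have hP : |(A x * C (R - x) + A' x * S (R - x)) - A R| ≤ δ * K * (R - x) := by
    have := (convex_Icc x R).norm_image_sub_le_of_norm_hasDerivWithin_le
      (f := fun y => A y * C (R - y) + A' y * S (R - y))
      (f' := fun y => (A'' y - c * A y) * S (R - y)) (C := δ * K) ?_ ?_ hRR hx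
    · simp only [sub_self, hC0, hS0, mul_one, mul_zero, add_zero, Real.norm_eq_abs] at this
      rwa [abs_sub_comm x R, abs_of_nonneg (sub_nonneg.2 hxR)] at this
    · intro y hy
      convert! (((hA y hy).mul (hCd y)).add ((hA' y hy).mul (hSd y))).hasDerivWithinAt using 1
      ring
    · intro y hy
      rw [Real.norm_eq_abs, abs_mul]
      exact mul_le_mul (he y hy) (hKS _ (hz y hy)) (abs_nonneg _) ((abs_nonneg _).trans (he y hy))
  have hQ : |A' x * C (R - x) + c * A x * S (R - x)| ≤ δ * K * (R - x) := by
    have := (convex_Icc x R).norm_image_sub_le_of_norm_hasDerivWithin_le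
      (f := fun y => A' y * C (R - y) + c * A y * S (R - y))
      (f' := fun y => (A'' y - c * A y) * C (R - y)) (C := δ * K) ?_ ?_ hRR hx
    · simp only [sub_self, hC0, hS0, mul_one, mul_zero, add_zero, Real.norm_eq_abs, hR,
        sub_zero] at this
      rwa [abs_sub_comm x R, abs_of_nonneg (sub_nonneg.2 hxR)] at this
    · intro y hy
      convert! (((hA' y hy).mul (hCd y)).add (((hA y hy).const_mul c).mul (hSd y))).hasDerivWithinAt
        using 1
      ring
    · intro y hy
      rw [Real.norm_eq_abs, abs_mul]
      exact mul_le_mul (he y hy) (hKC _ (hz y hy)) (abs_nonneg _) ((abs_nonneg _).trans (he y hy))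
  have key : A x - C (R - x) * A R = C (R - x) * ((A x * C (R - x) + A' x * S (R - x)) - A R)
      - S (R - x) * (A' x * C (R - x) + c * A x * S (R - x)) := by
    linear_combination (-(A x)) * hCS (R - x)
  rw [key]
  calc _ ≤ |C (R - x)| * |(A x * C (R - x) + A' x * S (R - x)) - A R|
        + |S (R - x)| * |A' x * C (R - x) + c * A x * S (R - x)| := by
        rw [← abs_mul, ← abs_mul]; exact abs_sub _ _
    _ ≤ K * (δ * K * (R - x)) + K * (δ * K * (R - x)) := by
        gcongr
        · exact hKC _ (hz x hx)
        · exact hKS _ (hz x hx)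
    _ = _ := by ring

/-! ### Sine coefficients on the arm -/


/-- The properties of an eigenfunction on the horizontal arm `(0,R) × (-1,0)` of the guide
that enter the decay estimate. They hold for the first eigenfunction and for its reflection
in the diagonal. -/
structure Arm (R lam : ℝ) (v : ℝ × ℝ → ℝ) : Prop where
  smooth : ∃ U, IsOpen U ∧ Ioc 0 R ×ˢ Ioo (-1) 0 ⊆ U ∧ ContDiffOn ℝ (⊤ : ℕ∞) v U
  cont : ContinuousOn v (Icc 0 R ×ˢ Icc (-1) 0)
  bot : ∀ x ∈ Ioc 0 R, v (x, -1) = 0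
  top : ∀ x ∈ Ioc 0 R, v (x, 0) = 0
  neu : ∀ t ∈ Ioo (-1 : ℝ) 0, pd1 v (R, t) = 0
  pde : ∀ x ∈ Ioo 0 R, ∀ t ∈ Ioo (-1 : ℝ) 0,
    pd1 (pd1 v) (x, t) + pd2 (pd2 v) (x, t) = -lam * v (x, t)
  pos : ∀ x ∈ Ioo 0 R, ∀ t ∈ Ioo (-1 : ℝ) 0, 0 < v (x, t)
  mass : ∫ p in Ioo 0 R ×ˢ Ioo (-1) 0, v p ^ 2 ≤ 1

/-- Sine coefficient of the cross-section `v (x, ·)`. -/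
def coef (v : ℝ × ℝ → ℝ) (k : ℕ) (x : ℝ) : ℝ := ∫ t in (-1 : ℝ)..0, v (x, t) * sin (k * π * t)

/-- A bound on the open arm passes to the edge `x = R`. -/
theorem le_at_edge {f : ℝ × ℝ → ℝ} {g : ℝ → ℝ} {r R t : ℝ} (hr : r < R)
    (hf : ContinuousAt f (R, t)) (hg : ContinuousAt g R) (h : ∀ x ∈ Ioo r R, f (x, t) ≤ g x) :
    f (R, t) ≤ g R := by
  have h1 : Tendsto (fun x : ℝ => f (x, t)) (𝓝[<] R) (𝓝 (f (R, t))) :=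
    (ContinuousAt.comp (f := fun x : ℝ => (x, t)) (x := R) hf (by fun_prop)).continuousWithinAt
  refine le_of_tendsto_of_tendsto h1 hg.continuousWithinAt ?_
  filter_upwards [Ioo_mem_nhdsLT hr] with x hx using h x hx

/-- The differential equation holds up to the Neumann edge. -/
theorem Arm.pde_edge {R lam : ℝ} {v : ℝ × ℝ → ℝ} (h : Arm R lam v) :
    ∀ x ∈ Ioc 0 R, ∀ t ∈ Ioo (-1 : ℝ) 0,
      pd1 (pd1 v) (x, t) + pd2 (pd2 v) (x, t) = -lam * v (x, t) := by
  intro x hx t ht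
  rcases hx.2.lt_or_eq with hlt | rfl
  · exact h.pde x ⟨hx.1, hlt⟩ t ht
  obtain ⟨U, hU, hsub, hv⟩ := h.smooth
  have hp : (x, t) ∈ U := hsub ⟨hx, ht⟩
  have hc : ContinuousAt (fun p => |pd1 (pd1 v) p + pd2 (pd2 v) p - -lam * v p|) (x, t) := by
    have h0 := hv.continuousOn.continuousAt (hU.mem_nhds hp)
    have h1 := (pd1_contDiffOn hU (pd1_contDiffOn hU hv)).continuousOn.continuousAt
      (hU.mem_nhds hp)
    have h2 := (pd2_contDiffOn hU (pd2_contDiffOn hU hv)).continuousOn.continuousAt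
      (hU.mem_nhds hp)
    exact ((h1.add h2).sub (continuousAt_const.mul h0)).abs
  have := le_at_edge (g := fun _ => 0) hx.1 hc continuousAt_const
    (fun y hy => by simp [h.pde y hy t ht])
  exact sub_eq_zero.1 (abs_nonpos_iff.1 this)

/-- Second derivative in `x` of the sine coefficient of the vertically contracted function
`v (x, θ (τ + 1/2) - 1/2)`, which is smooth up to `τ = -1, 0`. -/
theorem Arm.contracted_coef {R lam : ℝ} {v : ℝ × ℝ → ℝ} (h : Arm R lam v) (k : ℕ) {θ : ℝ}
    (h0 : 0 < θ) (h1 : θ < 1) :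
    ∃ B' B'' : ℝ → ℝ,
      (∀ y ∈ Ioc 0 R, HasDerivAt
        (fun y => ∫ τ in (-1 : ℝ)..0, v (y, θ * (τ + 1 / 2) - 1 / 2) * sin (k * π * τ)) (B' y) y) ∧
      (∀ y ∈ Ioc 0 R, HasDerivAt B' (B'' y) y) ∧ (0 < R → B' R = 0) ∧
      ∀ y ∈ Ioc 0 R, B'' y =
        ((k * π) ^ 2 / θ ^ 2 - lam) *
          (∫ τ in (-1 : ℝ)..0, v (y, θ * (τ + 1 / 2) - 1 / 2) * sin (k * π * τ))
        + k * π / θ ^ 2 * (v (y, θ * (0 + 1 / 2) - 1 / 2)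
            - v (y, θ * (-1 + 1 / 2) - 1 / 2) * cos (k * π * (-1))) := by
  obtain ⟨U, hU, hsub, hv⟩ := h.smooth
  set φ : ℝ → ℝ := fun τ => θ * (τ + 1 / 2) - 1 / 2 with hφdef
  have hφ : Continuous φ := by fun_prop
  have hs : Continuous (fun τ : ℝ => sin (k * π * τ)) := by fun_prop
  have hφI : ∀ τ ∈ Icc (-1 : ℝ) 0, φ τ ∈ Ioo (-1 : ℝ) 0 := fun τ hτ => by
    simp only [hφdef, mem_Ioo]; constructor <;> nlinarith [hτ.1, hτ.2]
  have hm : ∀ y ∈ Ioc 0 R, ∀ τ ∈ Icc (-1 : ℝ) 0, (y, φ τ) ∈ U := fun y hy τ hτ =>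
    hsub ⟨hy, hφI τ hτ⟩
  have hv1 := pd1_contDiffOn hU hv
  have hv11 := pd1_contDiffOn hU hv1
  have hv2 := pd2_contDiffOn hU hv
  have hv22 := pd2_contDiffOn hU hv2
  have huI : uIcc (-1 : ℝ) 0 = Icc (-1) 0 := uIcc_of_le (by norm_num)
  refine ⟨fun y => ∫ τ in (-1 : ℝ)..0, pd1 v (y, φ τ) * sin (k * π * τ),
    fun y => ∫ τ in (-1 : ℝ)..0, pd1 (pd1 v) (y, φ τ) * sin (k * π * τ),
    fun y hy => hasDerivAt_integral_pd1 hU hv hφ hs (hm y hy),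
    fun y hy => hasDerivAt_integral_pd1 hU hv1 hφ hs (hm y hy), ?_, ?_⟩
  · intro _
    refine (intervalIntegral.integral_congr (g := fun _ => (0 : ℝ)) fun τ hτ => ?_).trans (by simp)
    rw [huI] at hτ
    simp [h.neu _ (hφI τ hτ)]
  · intro y hy
    have hintegr : ∀ G : ℝ × ℝ → ℝ, ContinuousOn G U →
        IntervalIntegrable (fun τ => G (y, φ τ) * sin (k * π * τ)) volume (-1) 0 := by
      intro G hG
      apply ContinuousOn.intervalIntegrable
      rw [huI]
      exact (hG.comp (by fun_prop) (fun τ hτ => hm y hy τ hτ)).mul hs.continuousOn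
    have hφd : ∀ τ, HasDerivAt φ θ τ := fun τ => by
      have := (((hasDerivAt_id τ).add_const (1 / 2)).const_mul θ).sub_const (1 / 2)
      rwa [mul_one] at this
    have hlin : ∀ τ : ℝ, HasDerivAt (fun τ : ℝ => k * π * τ) (k * π) τ := fun τ => by
      simpa using (hasDerivAt_id τ).const_mul (k * π)
    -- Integration by parts twice, through an explicit primitive.
    have hFTC : ∫ τ in (-1 : ℝ)..0, (pd2 (pd2 v) (y, φ τ) * sin (k * π * τ)
          + (k * π) ^ 2 / θ ^ 2 * (v (y, φ τ) * sin (k * π * τ))) =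
        (pd2 v (y, φ 0) * sin (k * π * 0) / θ - k * π / θ ^ 2 * (v (y, φ 0) * cos (k * π * 0)))
        - (pd2 v (y, φ (-1)) * sin (k * π * (-1)) / θ
          - k * π / θ ^ 2 * (v (y, φ (-1)) * cos (k * π * (-1)))) := by
      refine intervalIntegral.integral_eq_sub_of_hasDerivAt
        (f := fun τ => pd2 v (y, φ τ) * sin (k * π * τ) / θ
          - k * π / θ ^ 2 * (v (y, φ τ) * cos (k * π * τ))) ?_ ?_
      · intro τ hτ
        rw [huI] at hτ
        have d1 : HasDerivAt (fun τ => v (y, φ τ)) (pd2 v (y, φ τ) * θ) τ :=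
          (hasDerivAt_pd2 (differentiableAt_of_smooth hU hv (hm y hy τ hτ))).comp τ (hφd τ)
        have d2 : HasDerivAt (fun τ => pd2 v (y, φ τ)) (pd2 (pd2 v) (y, φ τ) * θ) τ :=
          (hasDerivAt_pd2 (differentiableAt_of_smooth hU hv2 (hm y hy τ hτ))).comp τ (hφd τ)
        convert! ((d2.mul (hlin τ).sin).div_const θ).sub
          ((d1.mul (hlin τ).cos).const_mul (k * π / θ ^ 2)) using 1
        field_simp
        ring
      · exact (hintegr _ hv22.continuousOn).add ((hintegr _ hv.continuousOn).const_mul _)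
    rw [intervalIntegral.integral_add (hintegr _ hv22.continuousOn)
      ((hintegr _ hv.continuousOn).const_mul _), intervalIntegral.integral_const_mul] at hFTC
    have hsum : (∫ τ in (-1 : ℝ)..0, pd1 (pd1 v) (y, φ τ) * sin (k * π * τ))
        + (∫ τ in (-1 : ℝ)..0, pd2 (pd2 v) (y, φ τ) * sin (k * π * τ))
        = -lam * ∫ τ in (-1 : ℝ)..0, v (y, φ τ) * sin (k * π * τ) := by
      rw [← intervalIntegral.integral_add (hintegr _ hv11.continuousOn) (hintegr _ hv22.continuousOn),
        ← intervalIntegral.integral_const_mul]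
      refine intervalIntegral.integral_congr fun τ hτ => ?_
      rw [huI] at hτ
      have := h.pde_edge y hy _ (hφI τ hτ)
      linear_combination sin (k * π * τ) * this
    have hs1 : sin (k * π * (-1)) = 0 := by
      rw [show (k : ℝ) * π * (-1) = -(k * π) by ring, sin_neg, sin_nat_mul_pi, neg_zero]
    rw [hs1] at hFTC
    simp only [mul_zero, sin_zero, cos_zero, zero_div, mul_one, zero_sub] at hFTC
    change (∫ τ in (-1 : ℝ)..0, pd1 (pd1 v) (y, φ τ) * sin (k * π * τ)) =
      ((k * π) ^ 2 / θ ^ 2 - lam) * (∫ τ in (-1 : ℝ)..0, v (y, φ τ) * sin (k * π * τ))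
        + k * π / θ ^ 2 * (v (y, φ 0) - v (y, φ (-1)) * cos (k * π * (-1)))
    linear_combination hsum - hFTC

theorem abs_integral_mul_sin_le {f : ℝ → ℝ} {M a : ℝ} (hf : ∀ τ ∈ Icc (-1 : ℝ) 0, |f τ| ≤ M) :
    |∫ τ in (-1 : ℝ)..0, f τ * sin (a * τ)| ≤ M := by
  have := intervalIntegral.norm_integral_le_of_norm_le_const (a := (-1 : ℝ)) (b := 0)
    (f := fun τ => f τ * sin (a * τ)) (C := M) ?_
  · simpa using this
  · intro τ hτ
    rw [uIoc_of_le (by norm_num)] at hτ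
    have h1 := hf τ (Ioc_subset_Icc_self hτ)
    rw [Real.norm_eq_abs, abs_mul]
    calc _ ≤ M * 1 := mul_le_mul h1 (abs_sin_le_one _) (abs_nonneg _) ((abs_nonneg _).trans h1)
      _ = M := mul_one M

/-- Each sine coefficient solves `a'' = ((kπ)² - λ) a`, `a'(R) = 0`, stated in integrated form
with the even fundamental solution `C`. -/
theorem Arm.coef_eq {R lam : ℝ} {v : ℝ × ℝ → ℝ} (h : Arm R lam v) (k : ℕ) {C S : ℝ → ℝ}
    (hC : ∀ z, HasDerivAt C (((k * π) ^ 2 - lam) * S z) z) (hS : ∀ z, HasDerivAt S (C z) z)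
    (hC0 : C 0 = 1) (hS0 : S 0 = 0) (hCS : ∀ z, C z ^ 2 - ((k * π) ^ 2 - lam) * S z ^ 2 = 1)
    {x : ℝ} (hx : x ∈ Ioc 0 R) : coef v k x = C (R - x) * coef v k R := by
  have hsubx : Icc x R ⊆ Ioc 0 R := fun y hy => ⟨hx.1.trans_le hy.1, hy.2⟩
  have hxm : x ∈ Icc x R := ⟨le_rfl, hx.2⟩
  have hRm : R ∈ Icc x R := ⟨hx.2, le_rfl⟩
  have hK0 : IsCompact (Icc x R ×ˢ Icc (-1 : ℝ) 0) := isCompact_Icc.prod isCompact_Icc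
  have hcont : ContinuousOn v (Icc x R ×ˢ Icc (-1 : ℝ) 0) :=
    h.cont.mono (prod_mono (fun y hy => ⟨hx.1.le.trans hy.1, hy.2⟩) le_rfl)
  have huc := hK0.uniformContinuousOn_of_continuous hcont
  obtain ⟨M, hM⟩ := hK0.exists_bound_of_continuousOn hcont
  have hM0 : 0 ≤ M := (norm_nonneg _).trans (hM (x, 0) ⟨hxm, by constructor <;> norm_num⟩)
  obtain ⟨K₁, hK₁⟩ := (isCompact_Icc (a := 0) (b := R - x)).exists_bound_of_continuousOn
    (f := C) (fun z _ => (hC z).continuousAt.continuousWithinAt)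
  obtain ⟨K₂, hK₂⟩ := (isCompact_Icc (a := 0) (b := R - x)).exists_bound_of_continuousOn
    (f := S) (fun z _ => (hS z).continuousAt.continuousWithinAt)
  set K := max K₁ K₂
  have hKC : ∀ z ∈ Icc 0 (R - x), |C z| ≤ K := fun z hz => (hK₁ z hz).trans (le_max_left _ _)
  have hKS : ∀ z ∈ Icc 0 (R - x), |S z| ≤ K := fun z hz => (hK₂ z hz).trans (le_max_right _ _)
  set κ : ℝ := k * π with hκ
  have hκ0 : 0 ≤ κ := by positivity
  have hintegr : ∀ y ∈ Icc x R, IntervalIntegrable (fun t => v (y, t) * sin (κ * t)) volume (-1) 0 := by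
    intro y hy
    apply ContinuousOn.intervalIntegrable
    rw [uIcc_of_le (by norm_num)]
    exact (hcont.comp (by fun_prop) (fun t ht => ⟨hy, ht⟩)).mul (by fun_prop)
  have main : ∀ δ > 0, |coef v k x - C (R - x) * coef v k R|
      ≤ (1 + 2 * K ^ 2 * (R - x) * (1 + 8 * κ) + K) * δ := by
    intro δ hδ
    obtain ⟨η, hη, hηv⟩ := Metric.uniformContinuousOn_iff.1 huc δ hδ
    have hlim : Tendsto (fun θ : ℝ => |1 / θ ^ 2 - 1| * (κ ^ 2 * M)) (𝓝[<] 1) (𝓝 0) := by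
      have : ContinuousAt (fun θ : ℝ => |1 / θ ^ 2 - 1| * (κ ^ 2 * M)) 1 := by
        fun_prop (disch := norm_num)
      simpa [ContinuousAt] using this.tendsto.mono_left nhdsWithin_le_nhds
    obtain ⟨θ, ⟨hθ1, hθ2⟩, hθ3⟩ := (Filter.Eventually.and (Ioo_mem_nhdsLT
      (show max (1 / 2) (1 - η) < (1 : ℝ) from max_lt (by norm_num) (by linarith)))
      (hlim.eventually (gt_mem_nhds hδ))).exists
    have hθh : 1 / 2 < θ := (le_max_left _ _).trans_lt hθ1
    have hθη : 1 - η < θ := (le_max_right _ _).trans_lt hθ1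
    have hθ4 : 1 / θ ^ 2 ≤ 4 := by
      rw [div_le_iff₀ (by positivity)]; nlinarith
    obtain ⟨B', B'', hB, hB', hBR, hB''⟩ := h.contracted_coef k (by linarith : 0 < θ) hθ2
    set B : ℝ → ℝ := fun y => ∫ τ in (-1 : ℝ)..0, v (y, θ * (τ + 1 / 2) - 1 / 2) * sin (k * π * τ)
      with hBdef
    have hφI : ∀ τ ∈ Icc (-1 : ℝ) 0, θ * (τ + 1 / 2) - 1 / 2 ∈ Icc (-1 : ℝ) 0 := fun τ hτ => by
      constructor <;> nlinarith [hτ.1, hτ.2]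
    have hclose : ∀ y ∈ Icc x R, ∀ τ ∈ Icc (-1 : ℝ) 0,
        |v (y, θ * (τ + 1 / 2) - 1 / 2) - v (y, τ)| ≤ δ := by
      intro y hy τ hτ
      refine (hηv (y, _) ⟨hy, hφI τ hτ⟩ (y, τ) ⟨hy, hτ⟩ ?_).le
      rw [Prod.dist_eq, dist_self, Real.dist_eq]
      refine max_lt hη (abs_lt.2 ⟨?_, ?_⟩) <;> nlinarith [hτ.1, hτ.2]
    have hBcoef : ∀ y ∈ Icc x R, |coef v k y - B y| ≤ δ := by
      intro y hy
      have hi2 : IntervalIntegrable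
          (fun τ => v (y, θ * (τ + 1 / 2) - 1 / 2) * sin (κ * τ)) volume (-1) 0 := by
        apply ContinuousOn.intervalIntegrable
        rw [uIcc_of_le (by norm_num)]
        exact (hcont.comp (by fun_prop) (fun t ht => ⟨hy, hφI t ht⟩)).mul (by fun_prop)
      have : coef v k y - B y = ∫ τ in (-1 : ℝ)..0,
          (v (y, τ) - v (y, θ * (τ + 1 / 2) - 1 / 2)) * sin (κ * τ) := by
        rw [coef, hBdef, ← hκ, ← intervalIntegral.integral_sub (hintegr y hy) hi2]
        simp only [sub_mul]
      rw [this]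
      exact abs_integral_mul_sin_le fun τ hτ => by
        rw [abs_sub_comm]; exact hclose y hy τ hτ
    have hBM : ∀ y ∈ Icc x R, |B y| ≤ M := fun y hy =>
      abs_integral_mul_sin_le fun τ hτ => hM (y, _) ⟨hy, hφI τ hτ⟩
    have he : ∀ y ∈ Icc x R, |B'' y - (κ ^ 2 - lam) * B y| ≤ (1 + 8 * κ) * δ := by
      intro y hy
      rw [hB'' y (hsubx hy)]
      have e1 : |v (y, θ * (0 + 1 / 2) - 1 / 2)| ≤ δ := by
        simpa [h.top y (hsubx hy)] using hclose y hy 0 (by norm_num)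
      have e2 : |v (y, θ * (-1 + 1 / 2) - 1 / 2) * cos (κ * (-1))| ≤ δ := by
        rw [abs_mul]
        have : |v (y, θ * (-1 + 1 / 2) - 1 / 2)| ≤ δ := by
          simpa [h.bot y (hsubx hy)] using hclose y hy (-1) (by norm_num)
        calc _ ≤ δ * 1 := mul_le_mul this (abs_cos_le_one _) (abs_nonneg _) hδ.le
          _ = δ := mul_one δ
      have e3 : |(1 / θ ^ 2 - 1) * κ ^ 2 * B y| ≤ δ := by
        rw [abs_mul, abs_mul, abs_of_nonneg (sq_nonneg κ)]
        calc _ ≤ |1 / θ ^ 2 - 1| * κ ^ 2 * M := by gcongr; exact hBM y hy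
          _ ≤ δ := by rw [mul_assoc]; exact hθ3.le
      have e4 : |κ * (1 / θ ^ 2) * (v (y, θ * (0 + 1 / 2) - 1 / 2)
            - v (y, θ * (-1 + 1 / 2) - 1 / 2) * cos (κ * (-1)))| ≤ 8 * κ * δ := by
        rw [abs_mul, abs_of_nonneg (by positivity)]
        calc _ ≤ κ * 4 * (δ + δ) := by
              gcongr
              exact (abs_sub _ _).trans (add_le_add e1 e2)
          _ = _ := by ring
      have : ((κ) ^ 2 / θ ^ 2 - lam) * B y + κ / θ ^ 2 * (v (y, θ * (0 + 1 / 2) - 1 / 2)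
            - v (y, θ * (-1 + 1 / 2) - 1 / 2) * cos (κ * (-1))) - (κ ^ 2 - lam) * B y
          = (1 / θ ^ 2 - 1) * κ ^ 2 * B y + κ * (1 / θ ^ 2) * (v (y, θ * (0 + 1 / 2) - 1 / 2)
            - v (y, θ * (-1 + 1 / 2) - 1 / 2) * cos (κ * (-1))) := by
        ring
      change |((κ) ^ 2 / θ ^ 2 - lam) * B y + κ / θ ^ 2 * (v (y, θ * (0 + 1 / 2) - 1 / 2)
            - v (y, θ * (-1 + 1 / 2) - 1 / 2) * cos (κ * (-1))) - (κ ^ 2 - lam) * B y| ≤ _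
      rw [this]
      calc _ ≤ _ := abs_add_le _ _
        _ ≤ δ + 8 * κ * δ := add_le_add e3 e4
        _ = _ := by ring
    have hst := ode_stability hx.2 hC hS hC0 hS0 hCS hKC hKS (fun y hy => hB y (hsubx hy))
      (fun y hy => hB' y (hsubx hy)) (hBR (hx.1.trans_le hx.2)) he
    have hsplit : coef v k x - C (R - x) * coef v k R = (coef v k x - B x)
        + (B x - C (R - x) * B R) - C (R - x) * (coef v k R - B R) := by ring
    rw [hsplit]
    calc _ ≤ |coef v k x - B x| + |B x - C (R - x) * B R| + |C (R - x) * (coef v k R - B R)| :=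
          (abs_sub _ _).trans (add_le_add (abs_add_le _ _) le_rfl)
      _ ≤ δ + 2 * K ^ 2 * (R - x) * ((1 + 8 * κ) * δ) + K * δ := by
          rw [abs_mul]
          have := hKC (R - x) ⟨by linarith [hx.2], le_rfl⟩
          exact add_le_add (add_le_add (hBcoef x hxm) hst)
            (mul_le_mul this (hBcoef R hRm) (abs_nonneg _) ((abs_nonneg _).trans this))
      _ = _ := by ring
  set L := 1 + 2 * K ^ 2 * (R - x) * (1 + 8 * κ) + K
  have hlim : Tendsto (fun δ : ℝ => L * δ) (𝓝[>] 0) (𝓝 0) := by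
    have : ContinuousAt (fun δ : ℝ => L * δ) 0 := by fun_prop
    simpa [ContinuousAt] using this.tendsto.mono_left nhdsWithin_le_nhds
  have := ge_of_tendsto hlim (by filter_upwards [self_mem_nhdsWithin] with δ hδ using main δ hδ)
  exact sub_eq_zero.1 (abs_nonpos_iff.1 this)

/-! ### Bounds for the sine coefficients -/


/-- Bessel's inequality for a single coefficient, by Cauchy–Schwarz on an interval of length one. -/
theorem Arm.coef_sq_le {R lam : ℝ} {v : ℝ × ℝ → ℝ} (h : Arm R lam v) (k : ℕ) {x : ℝ}
    (hx : x ∈ Ioo 0 R) : coef v k x ^ 2 ≤ ∫ t in Ioo (-1 : ℝ) 0, v (x, t) ^ 2 := by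
  have hc : ContinuousOn (fun t => v (x, t)) (uIcc (-1 : ℝ) 0) := by
    rw [uIcc_of_le (by norm_num)]
    exact h.cont.comp (by fun_prop) fun t ht => ⟨Ioo_subset_Icc_self hx, ht⟩
  set g : ℝ → ℝ := fun t => v (x, t) * sin (k * π * t) with hg
  have hgc : ContinuousOn g (uIcc (-1 : ℝ) 0) := hc.mul (by fun_prop)
  set a := coef v k x
  have ha : ∫ t in (-1 : ℝ)..0, g t = a := rfl
  have i1 : IntervalIntegrable (fun t => g t ^ 2) volume (-1) 0 := (hgc.pow 2).intervalIntegrable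
  have i2 : IntervalIntegrable (fun t => 2 * a * g t) volume (-1) 0 :=
    (continuousOn_const.mul hgc).intervalIntegrable
  -- `∫ (g - a)² ≥ 0`, where `a` is the mean of `g`
  have h1 : 0 ≤ ∫ t in (-1 : ℝ)..0, (g t ^ 2 - 2 * a * g t + a ^ 2) :=
    intervalIntegral.integral_nonneg (by norm_num) fun t _ => by nlinarith [sq_nonneg (g t - a)]
  rw [intervalIntegral.integral_add (i1.sub i2) intervalIntegrable_const,
    intervalIntegral.integral_sub i1 i2, intervalIntegral.integral_const_mul, ha,
    intervalIntegral.integral_const] at h1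
  have h2 : ∫ t in (-1 : ℝ)..0, g t ^ 2 ≤ ∫ t in (-1 : ℝ)..0, v (x, t) ^ 2 := by
    refine intervalIntegral.integral_mono_on (by norm_num) i1 (hc.pow 2).intervalIntegrable
      fun t _ => ?_
    rw [hg]; simp only [mul_pow]
    nlinarith [sq_nonneg (v (x, t)), sin_sq_le_one (k * π * t)]
  rw [← integral_Ioc_eq_integral_Ioo, ← intervalIntegral.integral_of_le (by norm_num)]
  simp only [sub_neg_eq_add, zero_add, one_smul] at h1
  nlinarith

/-- The normalization of `v` turns a lower bound `D` for a squared coefficient along a piece of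
the arm into an upper bound for `D`. -/
theorem Arm.mass_bound {R lam : ℝ} {v : ℝ × ℝ → ℝ} (h : Arm R lam v) (k : ℕ) {p q D : ℝ}
    (hp : 0 ≤ p) (hpq : p ≤ q) (hq : q ≤ R) (hD : ∀ x ∈ Ioo p q, D ≤ coef v k x ^ 2) :
    D * (q - p) ≤ 1 := by
  have hi : IntegrableOn (fun z => v z ^ 2) (Ioo 0 R ×ˢ Ioo (-1 : ℝ) 0) :=
    ((h.cont.pow 2).integrableOn_compact (isCompact_Icc.prod isCompact_Icc)).mono_set
      (prod_mono Ioo_subset_Icc_self Ioo_subset_Icc_self)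
  have hm := h.mass
  rw [Measure.volume_eq_prod, setIntegral_prod _ hi] at hm
  have hN : IntegrableOn (fun x => ∫ t in Ioo (-1 : ℝ) 0, v (x, t) ^ 2) (Ioo 0 R) := by
    rw [IntegrableOn, Measure.volume_eq_prod, ← Measure.prod_restrict] at hi
    exact hi.integral_prod_left
  have hsub : Ioo p q ⊆ Ioo 0 R := Ioo_subset_Ioo hp hq
  have hnn : ∀ x, 0 ≤ ∫ t in Ioo (-1 : ℝ) 0, v (x, t) ^ 2 := fun x =>
    integral_nonneg fun t => sq_nonneg _
  have h1 : ∫ x in Ioo p q, (∫ t in Ioo (-1 : ℝ) 0, v (x, t) ^ 2) ≤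
      ∫ x in Ioo 0 R, (∫ t in Ioo (-1 : ℝ) 0, v (x, t) ^ 2) :=
    setIntegral_mono_set hN (ae_of_all _ hnn) hsub.eventuallyLE
  have h2 : ∫ _ in Ioo p q, D ≤ ∫ x in Ioo p q, (∫ t in Ioo (-1 : ℝ) 0, v (x, t) ^ 2) :=
    setIntegral_mono_on (by simp) (hN.mono_set hsub) measurableSet_Ioo
      fun x hx => (hD x hx).trans (h.coef_sq_le k (hsub hx))
  have h3 : ∫ _ in Ioo p q, D = D * (q - p) := by
    simp [Measure.real, hpq, mul_comm]
  linarith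

theorem Arm.coef_one_ne {R lam : ℝ} {v : ℝ × ℝ → ℝ} (h : Arm R lam v) {x : ℝ}
    (hx : x ∈ Ioo 0 R) : coef v 1 x ≠ 0 := by
  have hc : ContinuousOn (fun t => -(v (x, t) * sin ((1 : ℕ) * π * t))) (uIcc (-1 : ℝ) 0) := by
    rw [uIcc_of_le (by norm_num)]
    exact ((h.cont.comp (by fun_prop) fun t ht => ⟨Ioo_subset_Icc_self hx, ht⟩).mul
      (by fun_prop)).neg
  have := intervalIntegral.intervalIntegral_pos_of_pos_on hc.intervalIntegrable
    (fun t ht => by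
      have h1 := h.pos x hx t ht
      have h2 : sin ((1 : ℕ) * π * t) < 0 := by
        rw [Nat.cast_one, one_mul]
        exact sin_neg_of_neg_of_neg_pi_lt (by nlinarith [pi_pos, ht.2]) (by nlinarith [pi_pos, ht.1])
      nlinarith) (by norm_num)
  rw [intervalIntegral.integral_neg] at this
  rw [coef]
  intro h0
  rw [h0] at this
  simp at this

/-- Above the threshold `π²` the first mode oscillates; since the eigenfunction is positive it
performs at most a quarter of an oscillation along the arm. -/
theorem Arm.trig {R lam : ℝ} {v : ℝ × ℝ → ℝ} (h : Arm R lam v) (hlam : π ^ 2 < lam) :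
    (∀ x ∈ Ioc 0 R, coef v 1 x = cos (√(lam - π ^ 2) * (R - x)) * coef v 1 R) ∧
      √(lam - π ^ 2) * R ≤ π / 2 := by
  set ν := √(lam - π ^ 2) with hν
  have hν0 : 0 < ν := Real.sqrt_pos.2 (by linarith)
  have hν2 : ν ^ 2 = lam - π ^ 2 := Real.sq_sqrt (by linarith)
  have hd : ∀ z : ℝ, HasDerivAt (fun z => ν * z) ν z := fun z => by
    simpa using (hasDerivAt_id z).const_mul ν
  have hform : ∀ x ∈ Ioc 0 R, coef v 1 x = cos (ν * (R - x)) * coef v 1 R := by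
    intro x hx
    refine h.coef_eq 1 (C := fun z => cos (ν * z)) (S := fun z => sin (ν * z) / ν) ?_ ?_ ?_ ?_ ?_ hx
    · intro z
      convert! (hd z).cos using 1
      push_cast
      field_simp
      rw [hν2]; ring
    · intro z
      convert! (hd z).sin.div_const ν using 1
      field_simp
    · simp
    · simp
    · intro z
      push_cast
      field_simp
      rw [show π ^ 2 - lam = -ν ^ 2 by rw [hν2]; ring]
      linear_combination ν ^ 2 * sin_sq_add_cos_sq (ν * z)
  refine ⟨hform, ?_⟩
  by_contra! hcon
  have hx : R - π / 2 / ν ∈ Ioo 0 R := by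
    have : π / 2 / ν < R := by rw [div_lt_iff₀ hν0]; linarith
    have : 0 < π / 2 / ν := by positivity
    constructor <;> linarith
  apply h.coef_one_ne hx
  rw [hform _ (Ioo_subset_Ioc_self hx)]
  rw [show ν * (R - (R - π / 2 / ν)) = π / 2 by field_simp; ring, cos_pi_div_two, zero_mul]

/-- Below the threshold of the `k`-th mode, the coefficient is a hyperbolic cosine. -/
theorem Arm.hyp {R lam : ℝ} {v : ℝ × ℝ → ℝ} (h : Arm R lam v) (k : ℕ) {μ : ℝ}
    (hμ : μ ^ 2 = (k * π) ^ 2 - lam) {x : ℝ} (hx : x ∈ Ioc 0 R) :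
    coef v k x = cosh (μ * (R - x)) * coef v k R := by
  have hd : ∀ z : ℝ, HasDerivAt (fun z => μ * z) μ z := fun z => by
    simpa using (hasDerivAt_id z).const_mul μ
  by_cases h0 : μ = 0
  · refine h.coef_eq k (C := fun z => cosh (μ * z)) (S := fun z => z) ?_ ?_ ?_ ?_ ?_ hx
    · intro z; rw [← hμ]; convert! (hd z).cosh using 1; simp [h0]
    · intro z; convert! hasDerivAt_id z using 1; simp [h0]
    · simp
    · simp
    · intro z; rw [← hμ]; simp [h0]
  · refine h.coef_eq k (C := fun z => cosh (μ * z)) (S := fun z => sinh (μ * z) / μ) ?_ ?_ ?_ ?_ ?_ hx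
    · intro z; rw [← hμ]; convert! (hd z).cosh using 1; field_simp
    · intro z; convert! (hd z).sinh.div_const μ using 1; field_simp
    · simp
    · simp
    · intro z; rw [← hμ]; field_simp; linear_combination cosh_sq (μ * z)

/-- Uniform bounds for all derivatives of the `(n+1)`-st sine coefficient. The sequence `g`
collects the coefficient and its successive derivatives. -/
theorem Arm.coef_bound {R lam ω : ℝ} {v : ℝ × ℝ → ℝ} (h : Arm R lam v) (hR : 1 ≤ R)
    (hlam : 0 ≤ lam) (hω : ω = 0 ∨ ω ^ 2 ≤ π ^ 2 - lam) (n : ℕ) :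
    ∃ g : ℕ → ℝ → ℝ, (∀ l x, HasDerivAt (g l) (g (l + 1) x) x) ∧
      (∀ x ∈ Ioc 0 R, coef v (n + 1) x = g 0 x) ∧
      ∀ l, ∀ x ∈ Icc (3 / 4) R, |g l x| ≤
        4 * (((n + 1 : ℕ) : ℝ) * π) ^ l * (exp (-ω * (x - 3 / 4)) * exp (-(n * (π / 4)))) := by
  have hlam2 : lam ≤ π ^ 2 + π ^ 2 / 4 := by
    by_contra! hcon
    have hlt : π ^ 2 < lam := by nlinarith [sq_nonneg π]
    have h1 := (h.trig hlt).2
    have h2 : √(lam - π ^ 2) ≤ π / 2 := by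
      nlinarith [Real.sqrt_nonneg (lam - π ^ 2)]
    have h3 : lam - π ^ 2 ≤ (π / 2) ^ 2 := (Real.sqrt_le_left (by positivity)).1 h2
    nlinarith
  rcases lt_or_ge ((((n + 1 : ℕ) : ℝ) * π) ^ 2 - lam) 0 with hc | hc
  · -- only the first mode can oscillate, and then `ω = 0`
    have hn : n = 0 := by
      by_contra hn
      have : (1 : ℝ) ≤ n := by exact_mod_cast Nat.one_le_iff_ne_zero.2 hn
      push_cast at hc
      have : (4 : ℝ) ≤ (n + 1) ^ 2 := by nlinarith
      nlinarith [pi_pos, sq_nonneg π, mul_le_mul_of_nonneg_right this (sq_nonneg π)]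
    subst hn
    have hlt : π ^ 2 < lam := by simpa using hc
    have hω' : ω = 0 := by
      rcases hω with h0 | h0
      · exact h0
      · nlinarith [sq_nonneg ω]
    obtain ⟨hform, hq⟩ := h.trig hlt
    set ν := √(lam - π ^ 2)
    have hν0 : 0 ≤ ν := Real.sqrt_nonneg _
    have hνp : ν ≤ π / 2 := by nlinarith
    set A := coef v 1 R
    have hA : A ^ 2 / 2 * (R - (R - 1 / 2)) ≤ 1 := by
      refine h.mass_bound 1 (by linarith) (by linarith) le_rfl fun x hx => ?_
      rw [hform x ⟨by linarith [hx.1], hx.2.le⟩, mul_pow]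
      have h1 : ν * (R - x) ≤ π / 4 := by nlinarith [hx.1, hx.2]
      have h2 : cos (π / 4) ≤ cos (ν * (R - x)) :=
        cos_le_cos_of_nonneg_of_le_pi (mul_nonneg hν0 (by linarith [hx.2]))
          (by linarith [pi_pos]) h1
      have h3 : cos (π / 4) ^ 2 = 1 / 2 := by
        rw [cos_pi_div_four, div_pow, Real.sq_sqrt (by norm_num)]; norm_num
      have h4 : 1 / 2 ≤ cos (ν * (R - x)) ^ 2 := by
        rw [← h3]
        exact pow_le_pow_left₀ (by rw [cos_pi_div_four]; positivity) h2 2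
      nlinarith [sq_nonneg A]
    have hA2 : |A| ≤ 4 := abs_le_of_sq_le_sq (by nlinarith) (by norm_num)
    refine ⟨fun l x => A * (ν ^ l * cos (ν * (x - R) + l * (π / 2))), ?_, ?_, ?_⟩
    · intro l x
      have hd : HasDerivAt (fun x => ν * (x - R) + l * (π / 2)) ν x := by
        simpa using ((((hasDerivAt_id x).sub_const R).const_mul ν).add_const (l * (π / 2)))
      convert! ((hd.cos.const_mul (ν ^ l)).const_mul A) using 1
      push_cast
      rw [show ν * (x - R) + (l + 1) * (π / 2) = (ν * (x - R) + l * (π / 2)) + π / 2 by ring,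
        cos_add_pi_div_two]
      ring
    · intro x hx
      rw [zero_add, hform x hx]
      simp only [pow_zero, one_mul, Nat.cast_zero, zero_mul, add_zero]
      rw [show ν * (x - R) = -(ν * (R - x)) by ring, cos_neg, mul_comm]
    · intro l x hx
      rw [hω']
      simp only [zero_add, Nat.cast_one, one_mul, neg_zero, zero_mul, exp_zero, Nat.cast_zero,
        mul_one]
      rw [abs_mul, abs_mul, abs_of_nonneg (pow_nonneg hν0 l)]
      calc |A| * (ν ^ l * |cos (ν * (x - R) + l * (π / 2))|) ≤ 4 * (π ^ l * 1) := by
            gcongr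
            · linarith [pi_pos]
            · exact abs_cos_le_one _
        _ = _ := by ring
  · set k : ℕ := n + 1 with hk
    set μ := √((((k : ℕ) : ℝ) * π) ^ 2 - lam) with hμdef
    have hμ : μ ^ 2 = (k * π) ^ 2 - lam := Real.sq_sqrt hc
    have hμ0 : 0 ≤ μ := Real.sqrt_nonneg _
    have hkn : (k : ℝ) = n + 1 := by rw [hk]; push_cast; ring
    have hn0 : (0 : ℝ) ≤ n := Nat.cast_nonneg n
    have hμk : μ ≤ k * π := by
      apply Real.sqrt_le_iff.2 ⟨by positivity, by linarith⟩
    have hμn : n * π ≤ μ := by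
      apply Real.le_sqrt_of_sq_le
      rcases Nat.eq_zero_or_pos n with rfl | hn
      · simpa using hc
      · have : (1 : ℝ) ≤ n := by exact_mod_cast hn
        rw [hkn]
        nlinarith [sq_nonneg π, mul_le_mul_of_nonneg_right this (sq_nonneg π)]
    have hμω : ω ≤ μ := by
      rcases hω with h0 | h0
      · rw [h0]; exact hμ0
      · apply Real.le_sqrt_of_sq_le
        rw [hkn]
        nlinarith [sq_nonneg π, mul_nonneg hn0 (sq_nonneg π), mul_nonneg (mul_nonneg hn0 hn0) (sq_nonneg π)]
    set A := coef v k R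
    have hform : ∀ x ∈ Ioc 0 R, coef v k x = cosh (μ * (R - x)) * A := fun x hx => h.hyp k hμ hx
    have hA : (cosh (μ * (R - 1 / 2)) * A) ^ 2 * (1 / 2 - 0) ≤ 1 := by
      refine h.mass_bound k le_rfl (by norm_num) (by linarith) fun x hx => ?_
      rw [hform x ⟨hx.1, by linarith [hx.2]⟩, mul_pow, mul_pow]
      gcongr
      · rw [cosh_le_cosh, abs_of_nonneg (mul_nonneg hμ0 (by linarith)),
          abs_of_nonneg (mul_nonneg hμ0 (by linarith [hx.2]))]
        gcongr
        exact hx.2.le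
    have hA2 : |cosh (μ * (R - 1 / 2)) * A| ≤ 2 := abs_le_of_sq_le_sq (by nlinarith) (by norm_num)
    rw [abs_mul, abs_of_pos (cosh_pos _)] at hA2
    have hA3 : |A| * exp (μ * (R - 1 / 2)) ≤ 4 := by
      have : exp (μ * (R - 1 / 2)) ≤ 2 * cosh (μ * (R - 1 / 2)) := by
        rw [cosh_eq]; linarith [exp_pos (-(μ * (R - 1 / 2)))]
      nlinarith [abs_nonneg A]
    refine ⟨fun l x => A / 2 * ((-μ) ^ l * exp (μ * (R - x)) + μ ^ l * exp (-(μ * (R - x)))),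
      ?_, ?_, ?_⟩
    · intro l x
      have hd : HasDerivAt (fun x => μ * (R - x)) (-μ) x := by
        simpa using ((hasDerivAt_id x).const_sub R).const_mul μ
      convert! ((hd.exp.const_mul ((-μ) ^ l)).add (hd.neg.exp.const_mul (μ ^ l))).const_mul (A / 2)
        using 1
      simp only [Pi.neg_apply]
      ring
    · intro x hx
      rw [hform x hx, cosh_eq]
      ring
    · intro l x hx
      have e1 : |(-μ) ^ l * exp (μ * (R - x)) + μ ^ l * exp (-(μ * (R - x)))|
          ≤ 2 * (μ ^ l * exp (μ * (R - x))) := by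
        refine (abs_add_le _ _).trans ?_
        rw [abs_mul, abs_mul, abs_pow, abs_pow, abs_neg, abs_of_nonneg hμ0, abs_of_pos (exp_pos _),
          abs_of_pos (exp_pos _)]
        have : exp (-(μ * (R - x))) ≤ exp (μ * (R - x)) := by
          apply exp_le_exp.2
          linarith [mul_nonneg hμ0 (show 0 ≤ R - x by linarith [hx.2])]
        nlinarith [pow_nonneg hμ0 l]
      have e2 : exp (μ * (R - x)) = exp (μ * (R - 1 / 2)) * (exp (-μ * (x - 3 / 4)) * exp (-(μ / 4))) := by
        rw [← exp_add, ← exp_add]; congr 1; ring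
      have e3 : exp (-μ * (x - 3 / 4)) ≤ exp (-ω * (x - 3 / 4)) := by
        apply exp_le_exp.2; nlinarith [hx.1]
      have e4 : exp (-(μ / 4)) ≤ exp (-(n * (π / 4))) := by
        apply exp_le_exp.2; linarith
      rw [abs_mul, abs_div, abs_two]
      calc |A| / 2 * |(-μ) ^ l * exp (μ * (R - x)) + μ ^ l * exp (-(μ * (R - x)))|
          ≤ |A| / 2 * (2 * (μ ^ l * exp (μ * (R - x)))) := by gcongr
        _ = (|A| * exp (μ * (R - 1 / 2))) * μ ^ l * (exp (-μ * (x - 3 / 4)) * exp (-(μ / 4))) := by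
            rw [e2]; ring
        _ ≤ _ := by gcongr

/-! ### Pointwise convergence of sine series -/


/-- Odd extension of a function on `[-1,0]` to `[-1,1]`, complex-valued. -/
def oddExt (h : ℝ → ℝ) (t : ℝ) : ℂ := if t ≤ 0 then (h t : ℂ) else -(h (-t) : ℂ)

theorem oddExt_continuousOn {h : ℝ → ℝ} (hc : ContinuousOn h (Icc (-1) 0)) (h0 : h 0 = 0) :
    ContinuousOn (oddExt h) (Icc (-1) 1) := by
  have hU : Icc (-1 : ℝ) 1 = Icc (-1) 0 ∪ Icc 0 1 := (Icc_union_Icc_eq_Icc (by norm_num) (by norm_num)).symm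
  rw [hU]
  refine ContinuousOn.union_of_isClosed ?_ ?_ isClosed_Icc isClosed_Icc
  · refine ContinuousOn.congr (f := fun t => (h t : ℂ)) (by fun_prop) fun t ht => ?_
    simp [oddExt, ht.2]
  · refine ContinuousOn.congr (f := fun t => -(h (-t) : ℂ)) ?_ fun t ht => ?_
    · have : ContinuousOn (fun t => h (-t)) (Icc 0 1) :=
        hc.comp (by fun_prop) fun t ht => ⟨by linarith [ht.2], by linarith [ht.1]⟩
      exact (Complex.continuous_ofReal.comp_continuousOn this).neg
    · rcases ht.1.lt_or_eq with hlt | rfl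
      · simp [oddExt, not_le.2 hlt]
      · simp [oddExt, h0]

/-- Positivity of the period `2` of the odd extension, as required by `AddCircle`. -/
instance factTwo : Fact ((0 : ℝ) < 2) := ⟨two_pos⟩

/-- The Fourier coefficients of the odd extension are `-i` times the sine coefficients. -/
theorem fourierCoeff_oddExt {h : ℝ → ℝ} (hc : ContinuousOn h (Icc (-1) 0)) (h0 : h 0 = 0) (n : ℤ) :
    fourierCoeff (AddCircle.liftIco (2 : ℝ) (-1) (oddExt h)) n =
      -Complex.I * ((∫ t in (-1 : ℝ)..0, h t * sin (n * π * t) : ℝ) : ℂ) := by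
  have hH := oddExt_continuousOn hc h0
  rw [fourierCoeff_eq_intervalIntegral _ _ (-1)]
  have hcongr : ∫ x in (-1 : ℝ)..(-1 + 2), fourier (-n) (x : AddCircle (2 : ℝ)) •
        AddCircle.liftIco (2 : ℝ) (-1) (oddExt h) x =
      ∫ x in (-1 : ℝ)..(-1 + 2), Complex.exp (-(n * π * x : ℝ) * Complex.I) * oddExt h x := by
    refine intervalIntegral.integral_congr_Ioo_of_le (by norm_num) fun x hx => ?_
    simp only [smul_eq_mul]
    rw [AddCircle.liftIco_coe_apply (Ioo_subset_Ico_self hx), fourier_coe_apply]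
    congr 2
    push_cast
    ring
  rw [hcongr, show (-1 : ℝ) + 2 = 1 by norm_num]
  have hi : ∀ a b : ℝ, a ∈ Icc (-1 : ℝ) 1 → b ∈ Icc (-1 : ℝ) 1 → IntervalIntegrable
      (fun x : ℝ => Complex.exp (-(n * π * x : ℝ) * Complex.I) * oddExt h x) volume a b := by
    intro a b ha hb
    apply ContinuousOn.intervalIntegrable
    exact ContinuousOn.mul (by fun_prop) (hH.mono (uIcc_subset_Icc ha hb))
  rw [← intervalIntegral.integral_add_adjacent_intervals (b := 0) (hi _ _ (by norm_num) (by norm_num))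
    (hi _ _ (by norm_num) (by norm_num))]
  have h2 : ∫ x in (0 : ℝ)..1, Complex.exp (-(n * π * x : ℝ) * Complex.I) * oddExt h x =
      ∫ x in (-1 : ℝ)..0, -(Complex.exp ((n * π * x : ℝ) * Complex.I) * h x) := by
    have := intervalIntegral.integral_comp_neg (a := (0 : ℝ)) (b := 1)
      (fun x : ℝ => -(Complex.exp ((n * π * x : ℝ) * Complex.I) * h x))
    rw [neg_zero] at this
    rw [← this]
    refine intervalIntegral.integral_congr_Ioo_of_le (by norm_num) fun x hx => ?_
    simp only [oddExt, not_le.2 hx.1, if_false]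
    push_cast
    simp
  have h1 : ∫ x in (-1 : ℝ)..0, Complex.exp (-(n * π * x : ℝ) * Complex.I) * oddExt h x =
      ∫ x in (-1 : ℝ)..0, Complex.exp (-(n * π * x : ℝ) * Complex.I) * h x := by
    refine intervalIntegral.integral_congr_Ioo_of_le (by norm_num) fun x hx => ?_
    simp only [oddExt, hx.2.le, if_true]
  have hhc : ContinuousOn (fun x => (h x : ℂ)) (uIcc (-1 : ℝ) 0) := by
    rw [uIcc_of_le (by norm_num)]; fun_prop
  have i1 : IntervalIntegrable (fun x : ℝ => Complex.exp (-(n * π * x : ℝ) * Complex.I) * h x)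
      volume (-1) 0 := (ContinuousOn.mul (by fun_prop) hhc).intervalIntegrable
  have i2 : IntervalIntegrable (fun x : ℝ => -(Complex.exp ((n * π * x : ℝ) * Complex.I) * h x))
      volume (-1) 0 := (ContinuousOn.mul (by fun_prop) hhc).neg.intervalIntegrable
  rw [h1, h2, ← intervalIntegral.integral_add i1 i2,
    ← intervalIntegral.integral_ofReal, ← intervalIntegral.integral_const_mul,
    ← intervalIntegral.integral_smul]
  refine intervalIntegral.integral_congr fun x _ => ?_
  simp only [Complex.real_smul]
  push_cast
  rw [Complex.sin]
  have hI : Complex.I * Complex.I = -1 := Complex.I_mul_I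
  ring_nf
  rw [Complex.I_sq]
  ring

/-- A continuous function on `[-1,0]` vanishing at both ends is the sum of its sine series
as soon as its sine coefficients are summable. -/
theorem sine_series {h : ℝ → ℝ} (hc : ContinuousOn h (Icc (-1) 0)) (h0 : h 0 = 0) (h1 : h (-1) = 0)
    (hs : Summable fun k : ℕ => ∫ t in (-1 : ℝ)..0, h t * sin (k * π * t)) {t : ℝ}
    (ht : t ∈ Ioo (-1 : ℝ) 0) :
    HasSum (fun n : ℕ => 2 * (∫ s in (-1 : ℝ)..0, h s * sin ((n + 1 : ℕ) * π * s)) *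
      sin ((n + 1 : ℕ) * π * t)) (h t) := by
  set b : ℤ → ℝ := fun n => ∫ t in (-1 : ℝ)..0, h t * sin (n * π * t) with hb
  have hbneg : ∀ n, b (-n) = -b n := fun n => by
    simp only [hb]
    rw [← intervalIntegral.integral_neg]
    congr 1; ext s
    push_cast
    rw [show -(n : ℝ) * π * s = -(n * π * s) by ring, sin_neg]; ring
  have hcont : Continuous (AddCircle.liftIco (2 : ℝ) (-1) (oddExt h)) := by
    refine AddCircle.liftIco_continuous ?_ ?_
    · norm_num [oddExt, h1]
    · rw [show (-1 : ℝ) + 2 = 1 by norm_num]; exact oddExt_continuousOn hc h0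
  have hco : ∀ n, fourierCoeff (AddCircle.liftIco (2 : ℝ) (-1) (oddExt h)) n
      = -Complex.I * (b n : ℂ) := fourierCoeff_oddExt hc h0
  have hsum : Summable (fourierCoeff (AddCircle.liftIco (2 : ℝ) (-1) (oddExt h))) := by
    have hfun : fourierCoeff (AddCircle.liftIco (2 : ℝ) (-1) (oddExt h))
      = fun n => -Complex.I * (b n : ℂ) := funext hco
    rw [hfun]
    apply Summable.mul_left
    have hN : Summable fun k : ℕ => ((b k : ℝ) : ℂ) := Complex.summable_ofReal.2 (by simpa [hb] using hs)
    refine Summable.of_nat_of_neg hN ?_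
    simpa [hbneg] using hN.neg
  have hp := has_pointwise_sum_fourier_series_of_summable (f := ⟨_, hcont⟩) hsum (t : AddCircle (2 : ℝ))
  have hp2 := hp.nat_add_neg
  rw [← hasSum_nat_add_iff' 1] at hp2
  rw [← Complex.hasSum_ofReal]
  simp only [ContinuousMap.coe_mk] at hp2
  convert! hp2 using 1
  · ext n
    rw [hco, hco, hbneg, fourier_coe_apply, fourier_coe_apply]
    simp only [smul_eq_mul, hb]
    push_cast
    rw [Complex.sin]
    rw [show 2 * (π : ℂ) * Complex.I * (n + 1) * t / 2 = (n + 1) * π * t * Complex.I by ring,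
      show 2 * (π : ℂ) * Complex.I * -(n + 1) * t / 2 = -((n + 1) * π * t) * Complex.I by ring]
    ring
  · have : b 0 = 0 := by simp [hb]
    rw [AddCircle.liftIco_coe_apply ⟨ht.1.le, by linarith [ht.2]⟩]
    simp [hco, this, oddExt, ht.2.le]

/-! ### Termwise differentiation of the sine series -/


/-- The majorant of the `n`-th term of the series for a derivative of total order `p`. -/
def maj (p n : ℕ) : ℝ := 8 * (((n + 1 : ℕ) : ℝ) * π) ^ p * exp (-(n * (π / 4)))

theorem maj_summable (p : ℕ) : Summable (maj p) := by
  have h := (summable_nat_add_iff 1).2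
    (Real.summable_pow_mul_exp_neg_nat_mul p (r := π / 4) (by positivity))
  refine (h.mul_left (8 * π ^ p * exp (π / 4))).congr fun n => ?_
  have : exp (-(n * (π / 4))) = exp (π / 4) * exp (-(π / 4) * ((n + 1 : ℕ) : ℝ)) := by
    rw [← exp_add]; congr 1; push_cast; ring
  rw [maj, this, mul_pow]; ring

/-- The `n`-th term of the sine series of `∂₁^l ∂₂^m v`, where `g n l` is the `l`-th derivative
of the `n`-th sine coefficient. -/
def trm (g : ℕ → ℕ → ℝ → ℝ) (l m n : ℕ) (x t : ℝ) : ℝ :=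
  2 * g n l x * (((n + 1 : ℕ) : ℝ) * π) ^ m * sin (((n + 1 : ℕ) : ℝ) * π * t + m * (π / 2))

theorem trm_deriv_t (g : ℕ → ℕ → ℝ → ℝ) (l m n : ℕ) (x t : ℝ) :
    HasDerivAt (fun s => trm g l m n x s) (trm g l (m + 1) n x t) t := by
  have h1 : HasDerivAt (fun s : ℝ => ((n + 1 : ℕ) : ℝ) * π * s + m * (π / 2))
      (((n + 1 : ℕ) : ℝ) * π * 1) t := ((hasDerivAt_id t).const_mul _).add_const _
  have := h1.sin.const_mul (2 * g n l x * (((n + 1 : ℕ) : ℝ) * π) ^ m)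
  convert! this using 1
  rw [trm, show ((n + 1 : ℕ) : ℝ) * π * t + ((m + 1 : ℕ) : ℝ) * (π / 2)
    = (((n + 1 : ℕ) : ℝ) * π * t + m * (π / 2)) + π / 2 by push_cast; ring, sin_add_pi_div_two]
  ring

theorem trm_deriv_x {g : ℕ → ℕ → ℝ → ℝ} (hg : ∀ n l x, HasDerivAt (g n l) (g n (l + 1) x) x)
    (l m n : ℕ) (x t : ℝ) :
    HasDerivAt (fun y => trm g l m n y t) (trm g (l + 1) m n x t) x :=
  (((hg n l x).const_mul 2).mul_const _).mul_const _

/-- The size of each term: the decay rate `ω` in `x` is uniform in `n`. -/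
theorem trm_bound {g : ℕ → ℕ → ℝ → ℝ} {l m n : ℕ} {x E : ℝ} (t : ℝ)
    (h : |g n l x| ≤ 4 * (((n + 1 : ℕ) : ℝ) * π) ^ l * (E * exp (-(n * (π / 4))))) :
    |trm g l m n x t| ≤ E * maj (l + m) n := by
  have hp : 0 ≤ (((n + 1 : ℕ) : ℝ) * π) ^ m := by positivity
  rw [trm, abs_mul, abs_mul, abs_mul, abs_of_nonneg hp, abs_two]
  calc _ ≤ 2 * |g n l x| * (((n + 1 : ℕ) : ℝ) * π) ^ m * 1 := by
        gcongr; exact abs_sin_le_one _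
    _ ≤ 2 * (4 * (((n + 1 : ℕ) : ℝ) * π) ^ l * (E * exp (-(n * (π / 4))))) *
        (((n + 1 : ℕ) : ℝ) * π) ^ m * 1 := by gcongr
    _ = _ := by rw [maj, pow_add]; ring

/-- Termwise differentiation of the sine series of `v`, and the resulting pointwise bound,
at interior points of the arm. -/
theorem Arm.deriv_bound_interior {R lam ω : ℝ} {v : ℝ × ℝ → ℝ} (h : Arm R lam v) (hR : 1 ≤ R)
    (hlam : 0 ≤ lam) (hω0 : 0 ≤ ω) (hω : ω = 0 ∨ ω ^ 2 ≤ π ^ 2 - lam) (l m : ℕ) {x t : ℝ}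
    (hx : x ∈ Ioo (3 / 4) R) (ht : t ∈ Ioo (-1 : ℝ) 0) :
    |pd1^[l] (pd2^[m] v) (x, t)| ≤ exp (-ω * (x - 3 / 4)) * ∑' n, maj (l + m) n := by
  choose g hg hg0 hgb using fun n => h.coef_bound hR hlam hω n
  obtain ⟨U, hU, hUs, hv⟩ := h.smooth
  have hpU : ∀ x ∈ Ioo (3 / 4) R, ∀ t ∈ Ioo (-1 : ℝ) 0, (x, t) ∈ U := fun x hx t ht =>
    hUs ⟨⟨by linarith [hx.1], hx.2.le⟩, ht⟩
  have hE : ∀ x ∈ Ioo (3 / 4) R, exp (-ω * (x - 3 / 4)) ≤ 1 := fun x hx => by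
    rw [exp_le_one_iff]; nlinarith [hx.1]
  have hb : ∀ l m n, ∀ x ∈ Ioo (3 / 4) R, ∀ t, |trm g l m n x t| ≤
      exp (-ω * (x - 3 / 4)) * maj (l + m) n := fun l m n x hx t =>
    trm_bound t (hgb n l x (Ioo_subset_Icc_self hx))
  have hb1 : ∀ l m n, ∀ x ∈ Ioo (3 / 4) R, ∀ t, ‖trm g l m n x t‖ ≤ maj (l + m) n :=
    fun l m n x hx t => (hb l m n x hx t).trans
      (mul_le_of_le_one_left (by rw [maj]; positivity) (hE x hx))
  have hS : ∀ l m, ∀ x ∈ Ioo (3 / 4) R, ∀ t, Summable fun n => trm g l m n x t :=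
    fun l m x hx t => Summable.of_norm_bounded (maj_summable (l + m)) fun n => hb1 l m n x hx t
  have h00 : ∀ x ∈ Ioo (3 / 4) R, ∀ t ∈ Ioo (-1 : ℝ) 0, v (x, t) = ∑' n, trm g 0 0 n x t := by
    intro x hx t ht
    have hx' : x ∈ Ioc 0 R := ⟨by linarith [hx.1], hx.2.le⟩
    have hc : ContinuousOn (fun s => v (x, s)) (Icc (-1) 0) :=
      h.cont.comp (by fun_prop) fun s hs => ⟨Ioc_subset_Icc_self hx', hs⟩
    have hs : Summable fun k : ℕ => ∫ t in (-1 : ℝ)..0, v (x, t) * sin (k * π * t) := by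
      rw [← summable_nat_add_iff 1]
      refine Summable.of_norm_bounded (maj_summable 0) fun n => ?_
      change |coef v (n + 1 : ℕ) x| ≤ _
      rw [hg0 n x hx']
      refine (hgb n 0 x (Ioo_subset_Icc_self hx)).trans ?_
      rw [maj, pow_zero]
      have := hE x hx
      have hp := exp_pos (-(n * (π / 4)))
      nlinarith [mul_le_mul_of_nonneg_right this hp.le]
    have := sine_series hc (h.top x hx') (h.bot x hx') hs ht
    rw [← this.tsum_eq]
    refine tsum_congr fun n => ?_
    have h2 := hg0 n x hx'
    rw [trm, ← h2, coef]
    simp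
  have h0m : ∀ m, ∀ x ∈ Ioo (3 / 4) R, ∀ t ∈ Ioo (-1 : ℝ) 0,
      pd2^[m] v (x, t) = ∑' n, trm g 0 m n x t := by
    intro m
    induction m with
    | zero => exact h00
    | succ m ih =>
      intro x hx t ht
      rw [Function.iterate_succ_apply']
      have d1 := hasDerivAt_pd2 (differentiableAt_of_smooth hU
        (iter_pd2_contDiffOn hU hv m) (hpU x hx t ht))
      have d2 := hasDerivAt_tsum_of_isPreconnected (maj_summable (0 + (m + 1))) isOpen_Ioo
        isPreconnected_Ioo (fun n s _ => trm_deriv_t g 0 m n x s)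
        (fun n s _ => hb1 0 (m + 1) n x hx s) ht (hS 0 m x hx t) ht
      refine d1.unique (d2.congr_of_eventuallyEq ?_)
      filter_upwards [isOpen_Ioo.mem_nhds ht] with s hs using ih x hx s hs
  have hlm : ∀ l, ∀ x ∈ Ioo (3 / 4) R, ∀ t ∈ Ioo (-1 : ℝ) 0,
      pd1^[l] (pd2^[m] v) (x, t) = ∑' n, trm g l m n x t := by
    intro l
    induction l with
    | zero => exact h0m m
    | succ l ih =>
      intro x hx t ht
      rw [Function.iterate_succ_apply']
      have d1 := hasDerivAt_pd1 (differentiableAt_of_smooth hU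
        (iter_pd1_contDiffOn hU (iter_pd2_contDiffOn hU hv m) l) (hpU x hx t ht))
      have d2 := hasDerivAt_tsum_of_isPreconnected (maj_summable (l + 1 + m)) isOpen_Ioo
        isPreconnected_Ioo (fun n y _ => trm_deriv_x hg l m n y t)
        (fun n y hy => hb1 (l + 1) m n y hy t) hx (hS l m x hx t) hx
      refine d1.unique (d2.congr_of_eventuallyEq ?_)
      filter_upwards [isOpen_Ioo.mem_nhds hx] with y hy using ih y hy t ht
  rw [hlm l x hx t ht, ← tsum_mul_left]
  rw [← Real.norm_eq_abs]
  exact tsum_of_norm_bounded (f := fun n => trm g l m n x t)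
    ((maj_summable (l + m)).mul_left _).hasSum fun n => hb l m n x hx t

theorem Arm.deriv_bound {R lam ω : ℝ} {v : ℝ × ℝ → ℝ} (h : Arm R lam v) (hR : 1 ≤ R)
    (hlam : 0 ≤ lam) (hω0 : 0 ≤ ω) (hω : ω = 0 ∨ ω ^ 2 ≤ π ^ 2 - lam) (l m : ℕ) {x t : ℝ}
    (hx : x ∈ Icc 1 R) (ht : t ∈ Ioo (-1 : ℝ) 0) :
    |pd1^[l] (pd2^[m] v) (x, t)| ≤ exp (-ω * (x - 3 / 4)) * ∑' n, maj (l + m) n := by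
  rcases hx.2.lt_or_eq with hlt | rfl
  · exact h.deriv_bound_interior hR hlam hω0 hω l m ⟨by linarith [hx.1], hlt⟩ ht
  · obtain ⟨U, hU, hUs, hv⟩ := h.smooth
    refine le_at_edge (r := 3 / 4) (f := fun p => |pd1^[l] (pd2^[m] v) p|)
      (g := fun x => exp (-ω * (x - 3 / 4)) * ∑' n, maj (l + m) n) (by linarith) ?_ (by fun_prop)
      fun y hy => h.deriv_bound_interior hR hlam hω0 hω l m hy ht
    exact (differentiableAt_of_smooth hU (iter_pd1_contDiffOn hU (iter_pd2_contDiffOn hU hv m) l)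
      (hUs ⟨⟨by linarith, le_rfl⟩, ht⟩)).continuousAt.abs

theorem Arm.L2_bound {R lam ω : ℝ} {v : ℝ × ℝ → ℝ} (h : Arm R lam v) (hR : 1 ≤ R)
    (hlam : 0 ≤ lam) (hω0 : 0 ≤ ω) (hω : ω = 0 ∨ ω ^ 2 ≤ π ^ 2 - lam) (l m : ℕ) {x : ℝ}
    (hx : x ∈ Icc 1 R) :
    √(∫ t in Ioo (-1 : ℝ) 0, (pd1^[l] (pd2^[m] v) (x, t)) ^ 2) ≤
      (exp (ω * (3 / 4)) * ∑' n, maj (l + m) n) * exp (-x * ω) := by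
  have hC : 0 ≤ ∑' n, maj (l + m) n := tsum_nonneg fun n => by rw [maj]; positivity
  have he : exp (-ω * (x - 3 / 4)) = exp (ω * (3 / 4)) * exp (-x * ω) := by
    rw [← exp_add]; congr 1; ring
  have := norm_setIntegral_le_of_norm_le_const (μ := volume) (s := Ioo (-1 : ℝ) 0)
    (f := fun t => (pd1^[l] (pd2^[m] v) (x, t)) ^ 2)
    (C := (exp (-ω * (x - 3 / 4)) * ∑' n, maj (l + m) n) ^ 2) (by simp) fun t ht => by
      rw [norm_pow]
      exact pow_le_pow_left₀ (norm_nonneg _) (h.deriv_bound hR hlam hω0 hω l m hx ht) 2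
  rw [Real.sqrt_le_left (by positivity)]
  refine (le_abs_self _).trans (this.trans_eq ?_)
  rw [he]
  simp
  ring

/-! ### Comparison of the two first eigenvalues -/


/-- The one-dimensional Poincaré inequality with the sharp constant, for functions compactly
supported in `(-1,0)`: the difference of the two sides is the integral of
`(f' - π cot(πt) f)²`, up to an exact derivative. -/
theorem poincare_one {f : ℝ → ℝ} (hf : ContDiff ℝ 1 f) (hs : tsupport f ⊆ Ioo (-1) 0) :
    0 ≤ ∫ t in Ioo (-1 : ℝ) 0, (deriv f t ^ 2 - π ^ 2 * f t ^ 2) := by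
  set c : ℝ → ℝ := fun t => cos (π * t) / sin (π * t) with hc
  have hf' : Continuous (deriv f) := hf.continuous_deriv le_rfl
  have hfc := hf.continuous
  have hsin : ∀ t ∈ Ioo (-1 : ℝ) 0, sin (π * t) ≠ 0 := fun t ht =>
    (sin_neg_of_neg_of_neg_pi_lt (by nlinarith [pi_pos, ht.2]) (by nlinarith [pi_pos, ht.1])).ne
  have hz : ∀ t ∉ Ioo (-1 : ℝ) 0, f =ᶠ[𝓝 t] 0 := fun t ht =>
    notMem_tsupport_iff_eventuallyEq.1 fun h => ht (hs h)
  set G' : ℝ → ℝ := fun t => 2 * π * c t * f t * deriv f t - π ^ 2 * (1 + c t ^ 2) * f t ^ 2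
  have hG : ∀ t, HasDerivAt (fun t => π * c t * f t ^ 2) (G' t) t := by
    intro t
    by_cases ht : t ∈ Ioo (-1 : ℝ) 0
    · have h1 : HasDerivAt (fun s => π * s) (π * 1) t := (hasDerivAt_id t).const_mul π
      have h2 := h1.cos.div h1.sin (hsin t ht)
      have h3 := (h2.const_mul π).mul (((hf.differentiable one_ne_zero) t).hasDerivAt.pow 2)
      convert! h3 using 1
      have h4 := hsin t ht
      have h5 := sin_sq_add_cos_sq (π * t)
      simp only [G', hc]
      simp
      field_simp
      ring
    · have h0 : G' t = 0 := by simp [G', (hz t ht).eq_of_nhds]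
      rw [h0]
      refine (hasDerivAt_const t (0 : ℝ)).congr_of_eventuallyEq ?_
      filter_upwards [hz t ht] with s hs
      simp [hs]
  have hGc : Continuous G' := by
    rw [continuous_iff_continuousAt]
    intro t
    by_cases ht : t ∈ Ioo (-1 : ℝ) 0
    · have : ContinuousAt c t := ContinuousAt.div (by fun_prop) (by fun_prop) (hsin t ht)
      have h1 := hf'.continuousAt (x := t)
      have h2 := hfc.continuousAt (x := t)
      fun_prop
    · refine (continuousAt_const (y := (0 : ℝ))).congr ?_
      filter_upwards [hz t ht] with s hs
      simp [G', hs]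
  rw [← integral_Ioc_eq_integral_Ioo, ← intervalIntegral.integral_of_le (by norm_num)]
  have hz0 : ∫ t in (-1 : ℝ)..0, G' t = 0 := by
    rw [intervalIntegral.integral_eq_sub_of_hasDerivAt (fun t _ => hG t)
      (hGc.intervalIntegrable _ _), (hz 0 (by simp)).eq_of_nhds, (hz (-1) (by simp)).eq_of_nhds]
    simp
  have hsub := intervalIntegral.integral_sub (μ := volume) (a := -1) (b := 0)
    (f := fun t => deriv f t ^ 2 - π ^ 2 * f t ^ 2) (g := G')
    (Continuous.intervalIntegrable (by fun_prop) _ _) (hGc.intervalIntegrable _ _)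
  rw [hz0, sub_zero] at hsub
  rw [← hsub]
  refine intervalIntegral.integral_nonneg (by norm_num) fun t _ => ?_
  have : deriv f t ^ 2 - π ^ 2 * f t ^ 2 - G' t = (deriv f t - π * c t * f t) ^ 2 := by
    simp only [G']; ring
  rw [this]; positivity

theorem isOpen_Gam : IsOpen Gam := by
  have hc : Continuous fun p : ℝ × ℝ => min p.1 p.2 := by fun_prop
  exact (isOpen_lt (continuous_const (y := (-1 : ℝ))) hc).inter
    (isOpen_lt hc (continuous_const (y := (0 : ℝ))))

theorem isOpen_Box (L : ℝ) : IsOpen (Box L) := by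
  have h1 : Continuous fun p : ℝ × ℝ => |p.1 + 1| := by fun_prop
  have h2 : Continuous fun p : ℝ × ℝ => |p.2 + 1| := by fun_prop
  exact (isOpen_lt h1 (continuous_const (y := L))).inter
    (isOpen_lt h2 (continuous_const (y := L)))

theorem isOpen_GamR (R : ℝ) : IsOpen (GamR R) := isOpen_Gam.inter (isOpen_Box _)

theorem DirB_not_mem_Gam {R : ℝ} {p : ℝ × ℝ} (hp : p ∈ DirB R) : p ∉ Gam := by
  intro hG
  have h1 : p ∈ closure (Box (R + 1)) := closure_mono inter_subset_right hp.1.1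
  by_cases hB : p ∈ Box (R + 1)
  · exact hp.1.2 (by rw [(isOpen_GamR R).interior_eq]; exact ⟨hG, hB⟩)
  · exact hp.2 ⟨hp.1, h1, by rwa [(isOpen_Box _).interior_eq]⟩

theorem gradSq2_eq (u : ℝ × ℝ → ℝ) : gradSq2 u = fun p => pd1 u p ^ 2 + pd2 u p ^ 2 := rfl

theorem lamR_nonneg (R : ℝ) : 0 ≤ lamR R := by
  refine Real.sInf_nonneg ?_
  rintro r ⟨u, -, -, rfl⟩
  refine div_nonneg (integral_nonneg fun p => ?_) (integral_nonneg fun p => sq_nonneg _)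
  simp only [gradSq2_eq, Pi.zero_apply]; positivity

theorem continuous_pd1 {u : ℝ × ℝ → ℝ} (hu : ContDiff ℝ 1 u) : Continuous (pd1 u) :=
  (hu.continuous_fderiv one_ne_zero).clm_apply continuous_const

theorem continuous_pd2 {u : ℝ × ℝ → ℝ} (hu : ContDiff ℝ 1 u) : Continuous (pd2 u) :=
  (hu.continuous_fderiv one_ne_zero).clm_apply continuous_const

theorem compactSupport_pd1 {u : ℝ × ℝ → ℝ} (hu : HasCompactSupport u) :
    HasCompactSupport (pd1 u) := hu.fderiv_apply ℝ _

theorem compactSupport_pd2 {u : ℝ × ℝ → ℝ} (hu : HasCompactSupport u) :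
    HasCompactSupport (pd2 u) := hu.fderiv_apply ℝ _

theorem compactSupport_sq {w : ℝ × ℝ → ℝ} (hs : HasCompactSupport w) :
    HasCompactSupport fun p => w p ^ 2 := by
  have h0 : (fun y : ℝ => y ^ 2) 0 = 0 := by norm_num
  exact HasCompactSupport.comp_left (g := fun y : ℝ => y ^ 2) hs h0

theorem integrable_sq {w : ℝ × ℝ → ℝ} (hc : Continuous w) (hs : HasCompactSupport w) :
    Integrable fun p => w p ^ 2 := by
  have h1 : Continuous fun p => w p ^ 2 := by fun_prop
  exact h1.integrable_of_hasCompactSupport (compactSupport_sq hs)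

/-- Fibrewise Poincaré inequality on the part of an arm beyond `x₁ = R`. -/
theorem arm_poincare {R : ℝ} (hR : 0 ≤ R) {u : ℝ × ℝ → ℝ} (hu : ContDiff ℝ 1 u)
    (hcs : HasCompactSupport u) (hs : tsupport u ⊆ Gam) :
    π ^ 2 * (∫ p in Ici R ×ˢ Ioo (-1 : ℝ) 0, u p ^ 2) ≤
      ∫ p in Ici R ×ˢ Ioo (-1 : ℝ) 0, pd2 u p ^ 2 := by
  have i1 := integrable_sq hu.continuous hcs
  have i2 := integrable_sq (continuous_pd2 hu) (compactSupport_pd2 hcs)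
  rw [← integral_const_mul, ← sub_nonneg, ← integral_sub i2.integrableOn
    (i1.const_mul _).integrableOn, Measure.volume_eq_prod,
    setIntegral_prod (fun p : ℝ × ℝ => pd2 u p ^ 2 - π ^ 2 * u p ^ 2)
      (i2.sub (i1.const_mul _)).integrableOn]
  refine setIntegral_nonneg measurableSet_Ici fun x hx => ?_
  have hd : ∀ t, deriv (fun t => u (x, t)) t = pd2 u (x, t) := fun t =>
    (hasDerivAt_pd2 ((hu.differentiable one_ne_zero) (x, t))).deriv
  simp only [← hd]
  refine poincare_one (hu.comp (by fun_prop)) ?_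
  have hx0 : 0 ≤ x := hR.trans hx
  intro t ht
  have h1 : tsupport (fun t => u (x, t)) ⊆ (fun t => (x, t)) ⁻¹' tsupport u :=
    closure_minimal (fun t ht => subset_tsupport u ht)
      ((isClosed_tsupport u).preimage (by fun_prop))
  have h2 := hs (h1 ht)
  simp only [Gam, mem_ofPred_eq, lt_min_iff, min_lt_iff] at h2
  rcases h2 with ⟨⟨_, h3⟩, h4 | h4⟩
  · linarith
  · exact ⟨h3, h4⟩

theorem pd1_swap (u : ℝ × ℝ → ℝ) : pd1 (u ∘ Prod.swap) = pd2 u ∘ Prod.swap := by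
  ext p
  have := (ContinuousLinearEquiv.prodComm ℝ ℝ ℝ).comp_right_fderiv (f := u) (x := p)
  have h2 : u ∘ (ContinuousLinearEquiv.prodComm ℝ ℝ ℝ) = u ∘ Prod.swap := rfl
  rw [h2] at this
  simp [pd1, pd2, this]

theorem pd2_swap (u : ℝ × ℝ → ℝ) : pd2 (u ∘ Prod.swap) = pd1 u ∘ Prod.swap := by
  ext p
  have := (ContinuousLinearEquiv.prodComm ℝ ℝ ℝ).comp_right_fderiv (f := u) (x := p)
  have h2 : u ∘ (ContinuousLinearEquiv.prodComm ℝ ℝ ℝ) = u ∘ Prod.swap := rfl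
  rw [h2] at this
  simp [pd1, pd2, this]

theorem Gam_diff {R : ℝ} (hR : 0 < R) : Gam \ GamR R =
    (Ici R ×ˢ Ioo (-1 : ℝ) 0) ∪ (Ioo (-1 : ℝ) 0 ×ˢ Ici R) := by
  ext ⟨x, y⟩
  simp only [Gam, GamR, Box, Set.mem_sdiff, mem_inter_iff, mem_ofPred_eq, lt_min_iff, min_lt_iff,
    mem_union, mem_prod, mem_Ici, mem_Ioo, abs_lt]
  constructor
  · rintro ⟨⟨⟨h1, h2⟩, h3⟩, h4⟩
    by_contra! h5
    apply h4
    refine ⟨⟨⟨h1, h2⟩, h3⟩, ⟨by linarith, ?_⟩, by linarith, ?_⟩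
    · by_contra! h6
      rcases h3 with h3 | h3
      · linarith
      · linarith [h5.1 (by linarith) h2]
    · by_contra! h6
      rcases h3 with h3 | h3
      · linarith [h5.2 ⟨h1, h3⟩]
      · linarith
  · rintro (⟨h1, h2, h3⟩ | ⟨⟨h2, h3⟩, h1⟩)
    · exact ⟨⟨⟨by linarith, h2⟩, Or.inr h3⟩, fun h => by linarith [h.2.1.2]⟩
    · exact ⟨⟨⟨h2, by linarith⟩, Or.inl h3⟩, fun h => by linarith [h.2.2.2]⟩

theorem integral_Gam_split {R : ℝ} (hR : 0 < R) {F : ℝ × ℝ → ℝ} (hF : Integrable F) :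
    ∫ p in Gam, F p = (∫ p in GamR R, F p) + ((∫ p in Ici R ×ˢ Ioo (-1 : ℝ) 0, F p) +
      ∫ p in Ioo (-1 : ℝ) 0 ×ˢ Ici R, F p) := by
  have hsub : GamR R ⊆ Gam := inter_subset_left
  have hd : Disjoint (Ici R ×ˢ Ioo (-1 : ℝ) 0) (Ioo (-1 : ℝ) 0 ×ˢ Ici R) := by
    rw [Set.disjoint_left]
    rintro ⟨x, y⟩ ⟨h1, _⟩ ⟨h2, _⟩
    simp only [mem_Ici, mem_Ioo] at h1 h2
    linarith
  rw [← setIntegral_union hd (measurableSet_Ioo.prod measurableSet_Ici) hF.integrableOn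
    hF.integrableOn, ← Gam_diff hR, ← setIntegral_union disjoint_sdiff_right
    (isOpen_Gam.measurableSet.diff (isOpen_GamR R).measurableSet) hF.integrableOn
    hF.integrableOn, union_sdiff_cancel hsub]

theorem lamG_set_nonempty : {r | ∃ u : ℝ × ℝ → ℝ, ContDiff ℝ 1 u ∧ HasCompactSupport u ∧
    tsupport u ⊆ Gam ∧ (∫ p in Gam, (u p) ^ 2) ≠ 0 ∧
    r = (∫ p in Gam, gradSq2 u p) / ∫ p in Gam, (u p) ^ 2}.Nonempty := by
  have hm : ((-1 / 2 : ℝ), (-1 / 2 : ℝ)) ∈ Gam := by norm_num [Gam]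
  obtain ⟨f, h1, h2, h3, -, h5⟩ := exists_contDiff_tsupport_subset (n := 1)
    (isOpen_Gam.mem_nhds hm)
  have hfc : Continuous fun p => f p ^ 2 := h3.continuous.pow 2
  refine ⟨_, f, h3, h2, h1, ?_, rfl⟩
  rw [setIntegral_eq_integral_of_forall_compl_eq_zero]
  · refine (Continuous.integral_pos_of_hasCompactSupport_nonneg_nonzero (x := ((-1 / 2 : ℝ), (-1 / 2 : ℝ)))
      hfc (compactSupport_sq h2)
      (fun p => sq_nonneg _) ?_).ne'
    simp [h5]
  · intro p hp
    have : f p = 0 := by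
      by_contra h
      exact hp (h1 (subset_tsupport f h))
    simp [this]

/-- Cutting a test function for `Γ` off at distance `R` does not increase a Rayleigh quotient
below the transverse threshold `π²`, hence `λ₁(Γ_R) ≤ λ₁(Γ)` as soon as `λ₁(Γ) < π²`. -/
theorem lamR_le_lamG {R : ℝ} (hR : 0 < R) (hG : lamG < π ^ 2) : lamR R ≤ lamG := by
  by_contra! hlt
  obtain ⟨r, ⟨u, hu, hcs, hs, hN, hr⟩, hrlt⟩ :=
    exists_lt_of_csInf_lt lamG_set_nonempty (lt_min hlt hG)
  have hr1 : r < lamR R := hrlt.trans_le (min_le_left _ _)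
  have hr2 : r < π ^ 2 := hrlt.trans_le (min_le_right _ _)
  have i0 := integrable_sq hu.continuous hcs
  have i1 := integrable_sq (continuous_pd1 hu) (compactSupport_pd1 hcs)
  have i2 := integrable_sq (continuous_pd2 hu) (compactSupport_pd2 hcs)
  have ig : Integrable (gradSq2 u) := i1.add i2
  have hgsplit := integral_Gam_split hR ig
  have hnsplit := integral_Gam_split hR i0
  have hNpos : 0 < ∫ p in Gam, u p ^ 2 :=
    lt_of_le_of_ne (integral_nonneg fun p => sq_nonneg _) hN.symm
  have hrN : r * ∫ p in Gam, u p ^ 2 = ∫ p in Gam, gradSq2 u p := by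
    rw [hr, div_mul_cancel₀ _ hN]
  have a1 : π ^ 2 * (∫ p in Ici R ×ˢ Ioo (-1 : ℝ) 0, u p ^ 2) ≤
      ∫ p in Ici R ×ˢ Ioo (-1 : ℝ) 0, gradSq2 u p := by
    refine (arm_poincare hR.le hu hcs hs).trans ?_
    refine setIntegral_mono i2.integrableOn ig.integrableOn fun p => ?_
    simp only [gradSq2_eq]; nlinarith [sq_nonneg (pd1 u p)]
  have a2 : π ^ 2 * (∫ p in Ioo (-1 : ℝ) 0 ×ˢ Ici R, u p ^ 2) ≤
      ∫ p in Ioo (-1 : ℝ) 0 ×ˢ Ici R, gradSq2 u p := by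
    have hsw : Continuous (Prod.swap : ℝ × ℝ → ℝ × ℝ) := continuous_swap
    have hts : tsupport (u ∘ Prod.swap) ⊆ Gam := by
      have h1 : tsupport (u ∘ Prod.swap) ⊆ Prod.swap ⁻¹' tsupport u :=
        closure_minimal (fun t ht => subset_tsupport u ht)
          ((isClosed_tsupport u).preimage hsw)
      intro p hp
      have := hs (h1 hp)
      have h2 : p.swap ∈ Gam := this
      simpa [Gam, and_comm, or_comm] using h2
    have := arm_poincare hR.le (u := u ∘ Prod.swap) (hu.comp (contDiff_snd.prodMk contDiff_fst))
      (hcs.comp_homeomorph (Homeomorph.prodComm ℝ ℝ)) hts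
    rw [pd2_swap] at this
    simp only [Function.comp_apply, Measure.volume_eq_prod] at this
    rw [setIntegral_prod_swap (f := fun p => u p ^ 2),
      setIntegral_prod_swap (f := fun p => pd1 u p ^ 2)] at this
    refine this.trans ?_
    refine setIntegral_mono i1.integrableOn ig.integrableOn fun p => ?_
    simp only [gradSq2_eq]; nlinarith [sq_nonneg (pd2 u p)]
  have hn1 : 0 ≤ ∫ p in Ici R ×ˢ Ioo (-1 : ℝ) 0, u p ^ 2 := integral_nonneg fun p => sq_nonneg _
  have hn2 : 0 ≤ ∫ p in Ioo (-1 : ℝ) 0 ×ˢ Ici R, u p ^ 2 := integral_nonneg fun p => sq_nonneg _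
  have hn0 : 0 ≤ ∫ p in GamR R, u p ^ 2 := integral_nonneg fun p => sq_nonneg _
  have hg0 : 0 ≤ ∫ p in GamR R, gradSq2 u p := integral_nonneg fun p => by
    simp only [gradSq2_eq, Pi.zero_apply]; positivity
  have hb1 := mul_nonneg (sub_nonneg.2 hr2.le) hn1
  have hb2 := mul_nonneg (sub_nonneg.2 hr2.le) hn2
  have hnpos : 0 < ∫ p in GamR R, u p ^ 2 := by
    rcases hn0.lt_or_eq with h | h
    · exact h
    · exfalso
      have : 0 < (π ^ 2 - r) * ∫ p in Gam, u p ^ 2 := mul_pos (by linarith) hNpos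
      rw [hnsplit, ← h] at this hrN
      linarith
  have hle : (∫ p in GamR R, gradSq2 u p) / (∫ p in GamR R, u p ^ 2) ≤ r := by
    rw [div_le_iff₀ hnpos]
    rw [hnsplit] at hrN
    linarith
  have hmem : lamR R ≤ (∫ p in GamR R, gradSq2 u p) / (∫ p in GamR R, u p ^ 2) := by
    refine csInf_le ⟨0, ?_⟩ ⟨u, ⟨hu, fun p hp => ?_⟩, hnpos.ne', rfl⟩
    · rintro r ⟨u, -, -, rfl⟩
      refine div_nonneg (integral_nonneg fun p => ?_) (integral_nonneg fun p => sq_nonneg _)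
      simp only [gradSq2_eq, Pi.zero_apply]; positivity
    · by_contra h
      exact DirB_not_mem_Gam hp (hs (subset_tsupport u h))
  linarith

/-! ### From the eigenfunction on the guide to the arm -/


theorem mem_GamR_of_arm {R x t : ℝ} (hx : x ∈ Ioo 0 R) (ht : t ∈ Ioo (-1 : ℝ) 0) :
    (x, t) ∈ GamR R := by
  have h1 := hx.1
  have h2 := hx.2
  have h3 := ht.1
  have h4 := ht.2
  simp only [GamR, Gam, Box, mem_inter_iff, mem_ofPred_eq, lt_min_iff, min_lt_iff, abs_lt]
  refine ⟨⟨⟨?_, ?_⟩, Or.inr h4⟩, ⟨?_, ?_⟩, ?_, ?_⟩ <;> linarith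

theorem closed_arm_subset {R : ℝ} (hR : 0 < R) :
    Icc 0 R ×ˢ Icc (-1 : ℝ) 0 ⊆ closure (GamR R) := by
  rw [← closure_Ioo hR.ne, ← closure_Ioo (show (-1 : ℝ) ≠ 0 by norm_num), ← closure_prod_eq]
  exact closure_mono fun p hp => mem_GamR_of_arm hp.1 hp.2

/-- The lateral sides of the arm, without their end points, lie in the Dirichlet boundary. -/
theorem mem_DirB_of_side {R x t : ℝ} (hx : x ∈ Ioo 0 R) (ht : t = -1 ∨ t = 0) :
    (x, t) ∈ DirB R := by
  have h1 := hx.1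
  have h2 := hx.2
  have hG : (x, t) ∉ GamR R := by
    simp only [GamR, Gam, mem_inter_iff, mem_ofPred_eq, lt_min_iff, min_lt_iff]
    rintro ⟨⟨⟨h3, h4⟩, h5⟩, -⟩
    rcases ht with rfl | rfl
    · linarith
    · rcases h5 with h5 | h5 <;> linarith
  have hB : (x, t) ∈ Box (R + 1) := by
    simp only [Box, mem_ofPred_eq, abs_lt]
    rcases ht with rfl | rfl <;> refine ⟨⟨?_, ?_⟩, ?_, ?_⟩ <;> linarith
  have hcl : (x, t) ∈ closure (GamR R) := by
    refine closed_arm_subset (h1.trans h2) ⟨Ioo_subset_Icc_self hx, ?_⟩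
    rcases ht with rfl | rfl <;> norm_num
  refine ⟨⟨hcl, by rwa [(isOpen_GamR R).interior_eq]⟩, fun h => h.2.2 ?_⟩
  rwa [(isOpen_Box _).interior_eq]

theorem IsFirstEF.zero_on_side {R : ℝ} (hR : 0 < R) {v : ℝ × ℝ → ℝ} (h : IsFirstEF R v) {t : ℝ}
    (ht : t = -1 ∨ t = 0) {x : ℝ} (hx : x ∈ Icc 0 R) : v (x, t) = 0 := by
  obtain ⟨-, hc, hd, -⟩ := h
  have htm : t ∈ Icc (-1 : ℝ) 0 := by rcases ht with rfl | rfl <;> norm_num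
  have h1 : EqOn (fun y => v (y, t)) (fun _ => 0) (Ioo 0 R) := fun y hy =>
    hd _ (mem_DirB_of_side hy ht)
  exact Set.EqOn.of_subset_closure h1
    (hc.comp (by fun_prop) fun y hy => closed_arm_subset hR ⟨hy, htm⟩) continuousOn_const
    Ioo_subset_Icc_self (by rw [closure_Ioo hR.ne]) hx

theorem IsFirstEF.arm {R : ℝ} (hR : 1 ≤ R) {v : ℝ × ℝ → ℝ} (h : IsFirstEF R v) :
    Arm R (lamR R) v := by
  have hR0 : 0 < R := by linarith
  have hz := @IsFirstEF.zero_on_side R hR0 v h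
  obtain ⟨⟨U, hU, hUs, hv⟩, hc, -, hn, -, hpde, hpos, hmass⟩ := h
  refine ⟨⟨U, hU, fun p hp => hUs ?_, hv⟩, hc.mono (closed_arm_subset hR0),
    fun x hx => hz (Or.inl rfl) (Ioc_subset_Icc_self hx),
    fun x hx => hz (Or.inr rfl) (Ioc_subset_Icc_self hx), hn, ?_, ?_, ?_⟩
  · obtain ⟨x, t⟩ := p
    rcases hp.1.2.lt_or_eq with hlt | heq
    · exact Or.inl (mem_GamR_of_arm ⟨hp.1.1, hlt⟩ hp.2)
    · exact Or.inr (Or.inl ⟨heq, hp.2⟩)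
  · intro x hx t ht
    have := hpde _ (mem_GamR_of_arm hx ht)
    rw [lap2] at this
    linarith
  · intro x hx t ht
    exact hpos _ (mem_GamR_of_arm hx ht)
  · refine le_of_le_of_eq ?_ hmass
    refine setIntegral_mono_set ?_ (ae_of_all _ fun p => sq_nonneg _)
      (Eventually.of_forall fun p hp => mem_GamR_of_arm hp.1 hp.2)
    -- a non-integrable `v²` would have integral `0`, not `1`
    by_contra hni
    rw [integral_undef hni] at hmass
    exact zero_ne_one hmass

/-- The coordinate swap as a homeomorphism of the plane. -/
def swapH : ℝ × ℝ ≃ₜ ℝ × ℝ := Homeomorph.prodComm ℝ ℝ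

theorem swapH_preimage_GamR (R : ℝ) : swapH ⁻¹' GamR R = GamR R := by
  ext ⟨x, y⟩
  change (y, x) ∈ GamR R ↔ _
  simp only [GamR, Gam, Box, mem_inter_iff, mem_ofPred_eq, min_comm y x, and_comm]

theorem swapH_preimage_Box (L : ℝ) : swapH ⁻¹' Box L = Box L := by
  ext ⟨x, y⟩
  change (y, x) ∈ Box L ↔ _
  simp only [Box, mem_ofPred_eq, and_comm]

theorem swapH_preimage_DirB (R : ℝ) : swapH ⁻¹' DirB R = DirB R := by
  rw [DirB, Sig, preimage_sdiff, preimage_inter, swapH.preimage_frontier, swapH.preimage_frontier,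
    swapH_preimage_Box, swapH_preimage_GamR]

/-- The guide is symmetric in the diagonal, so the class of first eigenfunctions is too; the
estimate on `Σ_ρ²` for `v` is the one on `Σ_ρ¹` for `v ∘ swap`. -/
theorem IsFirstEF.swap {R : ℝ} {v : ℝ × ℝ → ℝ} (h : IsFirstEF R v) :
    IsFirstEF R (v ∘ Prod.swap) := by
  obtain ⟨⟨U, hU, hUs, hv⟩, hc, hd, hn1, hn2, hpde, hpos, hmass⟩ := h
  have hG : ∀ p ∈ GamR R, p.swap ∈ GamR R := fun p hp => by
    rw [← swapH_preimage_GamR] at hp; exact hp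
  refine ⟨⟨swapH ⁻¹' U, hU.preimage swapH.continuous, ?_, ?_⟩, ?_, ?_, ?_, ?_, ?_, ?_, ?_⟩
  · rintro p (hp | hp | hp)
    · exact hUs (Or.inl (hG p hp))
    · exact hUs (Or.inr (Or.inr ⟨hp.2, hp.1⟩))
    · exact hUs (Or.inr (Or.inl ⟨hp.2, hp.1⟩))
  · exact hv.comp (contDiff_snd.prodMk contDiff_fst).contDiffOn fun p hp => hp
  · refine hc.comp continuous_swap.continuousOn fun p hp => ?_
    rw [← swapH_preimage_GamR, ← swapH.preimage_closure] at hp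
    exact hp
  · intro p hp
    rw [← swapH_preimage_DirB] at hp
    exact hd _ hp
  · intro t ht
    rw [pd1_swap]; exact hn2 t ht
  · intro t ht
    rw [pd2_swap]; exact hn1 t ht
  · intro p hp
    have := hpde _ (hG p hp)
    simp only [lap2] at this
    simp only [lap2, pd1_swap, pd2_swap, Function.comp_apply]
    linarith
  · exact fun p hp => hpos _ (hG p hp)
  · have := (Measure.measurePreserving_swap (μ := (volume : Measure ℝ))
      (ν := (volume : Measure ℝ))).setIntegral_preimage_emb
      (MeasurableEquiv.prodComm (α := ℝ) (β := ℝ)).measurableEmbedding (fun p => v p ^ 2) (GamR R)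
    rw [← Measure.volume_eq_prod, show Prod.swap ⁻¹' GamR R = GamR R from swapH_preimage_GamR R,
      hmass] at this
    exact this

theorem iter_pd_swap (v : ℝ × ℝ → ℝ) (l m : ℕ) :
    pd1^[l] (pd2^[m] (v ∘ Prod.swap)) = pd2^[l] (pd1^[m] v) ∘ Prod.swap := by
  have h2 : pd2^[m] (v ∘ Prod.swap) = pd1^[m] v ∘ Prod.swap := by
    induction m with
    | zero => rfl
    | succ m ih => rw [Function.iterate_succ_apply', Function.iterate_succ_apply', ih, pd2_swap]
  rw [h2]
  induction l with
  | zero => rfl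
  | succ l ih => rw [Function.iterate_succ_apply', Function.iterate_succ_apply', ih, pd1_swap]

/-- The two cases in which the decay rate `ω` is admissible for `v_R`; if `λ₁(Γ) ≥ π²` the square
root defining `ω` is `0`. -/
theorem omega_sq_le {R : ℝ} (hR : 0 < R) : omega = 0 ∨ omega ^ 2 ≤ π ^ 2 - lamR R := by
  rcases lt_or_ge lamG (π ^ 2) with h | h
  · right
    rw [omega, Real.sq_sqrt (by linarith)]
    linarith [lamR_le_lamG hR h]
  · left
    exact Real.sqrt_eq_zero_of_nonpos (by linarith)

/-- Lemma 2.3: uniform exponential decay estimates for all derivatives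
of the first eigenfunction `v_R`. For all `ℓ, m ≥ 0` there is a constant `C_{ℓ,m}`,
independent of `R` and `ρ`, such that for all `R ≥ 1`, all `ρ ∈ [1,R]` and the first
eigenfunction `v_R`, one has `‖∂₁^ℓ ∂₂^m v_R‖_{L²(Σ_ρ¹)} ≤ C_{ℓ,m} e^{-ρω}` and
`‖∂₂^ℓ ∂₁^m v_R‖_{L²(Σ_ρ²)} ≤ C_{ℓ,m} e^{-ρω}`, with `ω = √(π² - λ₁(Γ))`. -/
theorem eigenfunction_decay :
    ∀ ℓ m : ℕ, ∃ C : ℝ, ∀ R : ℝ, 1 ≤ R → ∀ ρ ∈ Set.Icc (1 : ℝ) R,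
      ∀ v : ℝ × ℝ → ℝ, IsFirstEF R v →
        Real.sqrt (∫ t in II, ((pd1^[ℓ] (pd2^[m] v)) (ρ, t)) ^ 2) ≤
          C * Real.exp (-ρ * omega) ∧
        Real.sqrt (∫ t in II, ((pd2^[ℓ] (pd1^[m] v)) (t, ρ)) ^ 2) ≤
          C * Real.exp (-ρ * omega) := by
  intro ℓ m
  refine ⟨exp (omega * (3 / 4)) * ∑' n, maj (ℓ + m) n, fun R hR ρ hρ v hv => ?_⟩
  have hω := omega_sq_le (R := R) (by linarith)
  have hω0 : 0 ≤ omega := Real.sqrt_nonneg _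
  have h1 := (hv.arm hR).L2_bound hR (lamR_nonneg R) hω0 hω ℓ m hρ
  have h2 := (hv.swap.arm hR).L2_bound hR (lamR_nonneg R) hω0 hω ℓ m hρ
  rw [iter_pd_swap] at h2
  exact ⟨h1, h2⟩
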